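/- arXiv:1911.04349 — 4 statements merged into one kernel-verified Lean document; each statement's English description precedes it below -/
import Mathlib

section
/- For every η > 0 there exists a constant C > 0 such that for every n₀ ∈ ℤ², every real number μ ≥ 0, every point x₀ ∈ ℝ², and every radius R > 1, the number of lattice points n ∈ ℤ² satisfying |n − n₀|² = μ and |n − x₀| ≤ R is at most C·R^η. -/
/-!
Suppose that three distinct lattice points `a`, `b`, `c` lie both on the circle and in the ball.
Seen as Gaussian integers, they satisfy, with `p` the centre of the circle,
`Δ (p - a) = (b - a) (c - a) conj (b - c)`, where `Δ = conj (b - a) (c - a) - conj (c - a) (b - a)`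
is a nonzero Gaussian integer. Hence `n ↦ Δ (n - p)` embeds the lattice points of the circle into
the Gaussian integers of norm `m = |b - a|² |c - a|² |b - c|² ≤ (2 R) ^ 6`, whatever the radius of
the circle. Each of these divides `m`, and an element of norm `N` of a unique factorization monoid
has `O(N ^ ε)` divisors.
-/

open Finset UniqueFactorizationMonoid

namespace CircleInBall

section DivisorBound

theorem exists_add_one_le_mul_pow {a : ℝ} (ha : 1 < a) :
    ∃ K : ℝ, 1 ≤ K ∧ ∀ y, a ≤ y → ∀ e : ℕ, (e : ℝ) + 1 ≤ K * y ^ e := by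
  have hpos : 0 < a - 1 := sub_pos.2 ha
  refine ⟨max 1 (1 / (a - 1)), le_max_left _ _, fun y hy e ↦ ?_⟩
  set K := max 1 (1 / (a - 1))
  have hK : 1 ≤ K * (a - 1) := (div_le_iff₀ hpos).1 (le_max_right _ _)
  have bernoulli : 1 + e * (a - 1) ≤ a ^ e := one_add_mul_sub_le_pow (by linarith) e
  calc (e : ℝ) + 1 ≤ e * (K * (a - 1)) + K :=
        add_le_add (le_mul_of_one_le_right e.cast_nonneg hK) (le_max_left _ _)
    _ = K * (1 + e * (a - 1)) := by ring
    _ ≤ K * y ^ e := by gcongr; exact bernoulli.trans (by gcongr)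

theorem exists_card_Iic_le_mul_prod {ι : Type*} [DecidableEq ι] {f : ι → ℝ} {a : ℝ} (ha : 1 < a)
    (hf : {i | f i < 2}.Finite) :
    ∃ C : ℝ, 0 < C ∧ ∀ s : Multiset ι, (∀ i ∈ s, a ≤ f i) →
      (#(Iic s) : ℝ) ≤ C * (s.map f).prod := by
  obtain ⟨K, hK, hKf⟩ := exists_add_one_le_mul_pow ha
  refine ⟨K ^ #hf.toFinset, by positivity, fun s hs ↦ ?_⟩
  have count_le : ∀ i ∈ s.toFinset,
      (s.count i : ℝ) + 1 ≤ (if f i < 2 then K else 1) * f i ^ s.count i := by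
    intro i hi
    split_ifs with hi2
    · exact hKf _ (hs i (Multiset.mem_toFinset.1 hi)) _
    · calc (s.count i : ℝ) + 1 ≤ 2 ^ s.count i := mod_cast Nat.lt_two_pow_self
        _ ≤ 1 * f i ^ s.count i := by rw [one_mul]; gcongr; exact not_lt.1 hi2
  have prod_const_le : ∏ i ∈ s.toFinset, (if f i < 2 then K else 1) ≤ K ^ #hf.toFinset := by
    rw [prod_ite, prod_const, prod_const_one, mul_one]
    exact pow_le_pow_right₀ hK (card_le_card fun i ↦ by simp)
  have prod_nonneg : 0 ≤ (s.map f).prod :=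
    Multiset.prod_nonneg (by simpa using fun i hi ↦ zero_le_one.trans (ha.le.trans (hs i hi)))
  calc (#(Iic s) : ℝ) = ∏ i ∈ s.toFinset, ((s.count i : ℝ) + 1) := by
        rw [Multiset.card_Iic]; push_cast; rfl
    _ ≤ ∏ i ∈ s.toFinset, (if f i < 2 then K else 1) * f i ^ s.count i :=
        prod_le_prod (fun i _ ↦ by positivity) count_le
    _ = (∏ i ∈ s.toFinset, if f i < 2 then K else 1) * (s.map f).prod := by
        rw [prod_mul_distrib, prod_multiset_map_count]
    _ ≤ K ^ #hf.toFinset * (s.map f).prod := by gcongr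

variable {M : Type*} [CommMonoidWithZero M]

theorem finite_units_of_northcott (N : M →* ℕ) [Northcott N] : Finite Mˣ :=
  have : Finite {x | N x ≤ 1} := (Northcott.finite_le (h := N) 1).to_subtype
  .of_injective (fun u : Mˣ ↦ (⟨u, (Nat.isUnit_iff.1 (u.isUnit.map N)).le⟩ : {x | N x ≤ 1}))
    fun _ _ h ↦ Units.ext (congrArg Subtype.val h)

theorem two_le_of_not_isUnit [IsCancelMulZero M] (N : M →* ℕ) [Northcott N] {x : M} (hx₀ : x ≠ 0)
    (hx : ¬IsUnit x) : 2 ≤ N x := by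
  by_contra! hlt
  refine Set.infinite_range_of_injective (pow_injective_of_not_isUnit hx hx₀)
    ((Northcott.finite_le (h := N) 1).subset ?_)
  rintro _ ⟨n, rfl⟩
  simpa using pow_le_one' (Nat.le_of_lt_succ hlt) n

variable [UniqueFactorizationMonoid M]

theorem setOf_dvd_subset_image_units_mul_prod [NormalizationMonoid M] [DecidableEq M] {x : M}
    (hx : x ≠ 0) :
    {d | d ∣ x} ⊆ (fun us : Mˣ × Multiset M ↦ us.2.prod * us.1) ''
      (Set.univ ×ˢ (Iic (normalizedFactors x) : Set (Multiset M))) := by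
  intro d hd
  have hd₀ : d ≠ 0 := ne_zero_of_dvd_ne_zero hx hd
  obtain ⟨u, hu⟩ := prod_normalizedFactors hd₀
  refine ⟨(u, normalizedFactors d), ⟨trivial, ?_⟩, hu⟩
  simpa using (dvd_iff_normalizedFactors_le_normalizedFactors hd₀ hx).1 hd

theorem finite_setOf_dvd [Finite Mˣ] {x : M} (hx : x ≠ 0) : {d | d ∣ x}.Finite := by
  have := Fintype.ofFinite Mˣ
  exact @Set.toFinite _ {d | d ∣ x} (fintypeSubtypeDvd x hx).finite

theorem ncard_setOf_dvd_le [Finite Mˣ] [NormalizationMonoid M] [DecidableEq M] {x : M}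
    (hx : x ≠ 0) :
    {d | d ∣ x}.ncard ≤ Nat.card Mˣ * #(Iic (normalizedFactors x)) := by
  have hfin := Set.finite_univ.prod (Iic (normalizedFactors x)).finite_toSet (s := @Set.univ Mˣ)
  calc {d | d ∣ x}.ncard
      ≤ (Set.univ ×ˢ (Iic (normalizedFactors x) : Set (Multiset M)) : Set (Mˣ × _)).ncard :=
        (Set.ncard_le_ncard (setOf_dvd_subset_image_units_mul_prod hx) (hfin.image _)).trans
          (Set.ncard_image_le hfin)
    _ = Nat.card Mˣ * #(Iic (normalizedFactors x)) := by
        rw [Set.ncard_prod, Set.ncard_univ, Set.ncard_coe_finset]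

theorem exists_ncard_setOf_dvd_le (N : M →* ℕ) [Northcott N] {ε : ℝ} (hε : 0 < ε) :
    ∃ C : ℝ, 0 < C ∧ ∀ x : M, x ≠ 0 → ({d | d ∣ x}.ncard : ℝ) ≤ C * (N x : ℝ) ^ ε := by
  classical
  let : StrongNormalizationMonoid M := UniqueFactorizationMonoid.strongNormalizationMonoid
  have := finite_units_of_northcott N
  have small : {x : M | (N x : ℝ) ^ ε < 2}.Finite := by
    refine (Northcott.finite_le (h := N) ⌊(2 : ℝ) ^ ε⁻¹⌋₊).subset fun x hx ↦ Nat.le_floor ?_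
    exact (Real.le_rpow_inv_iff_of_pos (N x).cast_nonneg zero_le_two hε).2 (le_of_lt hx)
  obtain ⟨C, hC, hCs⟩ := exists_card_Iic_le_mul_prod (Real.one_lt_rpow one_lt_two hε) small
  refine ⟨Nat.card Mˣ * C, mul_pos (mod_cast Nat.card_pos) hC, fun x hx ↦ ?_⟩
  have le_rpow_factor : ∀ p ∈ normalizedFactors x, (2 : ℝ) ^ ε ≤ (N p : ℝ) ^ ε := by
    intro p hp
    have prime := prime_of_normalized_factor p hp
    gcongr
    exact_mod_cast two_le_of_not_isUnit N prime.ne_zero prime.not_isUnit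
  have prod_rpow_factors :
      ((normalizedFactors x).map fun p ↦ (N p : ℝ) ^ ε).prod = (N x : ℝ) ^ ε := by
    rw [Real.multiset_prod_map_rpow _ _ fun _ _ ↦ Nat.cast_nonneg _,
      ← associated_iff_eq.1 ((prod_normalizedFactors hx).map N), map_multiset_prod]
    simp [Nat.cast_multiset_prod]
  calc ({d | d ∣ x}.ncard : ℝ) ≤ Nat.card Mˣ * #(Iic (normalizedFactors x)) :=
        mod_cast ncard_setOf_dvd_le hx
    _ ≤ Nat.card Mˣ * (C * (N x : ℝ) ^ ε) := by
        rw [← prod_rpow_factors]; gcongr; exact hCs _ le_rpow_factor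
    _ = Nat.card Mˣ * C * (N x : ℝ) ^ ε := (mul_assoc _ _ _).symm

end DivisorBound

local notation "ℤ[i]" => GaussianInt

open ComplexConjugate Metric

/-- The norm `x² + y²` of the Gaussian integer `x + i y`, as a multiplicative map to `ℕ`. -/
def gaussianNorm : ℤ[i] →* ℕ :=
  (Int.natAbsHom : ℤ →* ℕ).comp Zsqrtd.normMonoidHom

theorem natCast_gaussianNorm (z : ℤ[i]) : (gaussianNorm z : ℤ) = z.norm :=
  GaussianInt.abs_natCast_norm z

theorem gaussianNorm_eq_norm_sq (z : ℤ[i]) : (gaussianNorm z : ℝ) = ‖(z : ℂ)‖ ^ 2 := by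
  rw [← Complex.normSq_eq_norm_sq, ← GaussianInt.intCast_real_norm, ← natCast_gaussianNorm,
    Int.cast_natCast]

instance northcott_gaussianNorm : Northcott gaussianNorm where
  finite_le b := by
    have box : (Set.Icc (-b : ℤ) b ×ˢ Set.Icc (-b : ℤ) b).Finite :=
      (Set.finite_Icc _ _).prod (Set.finite_Icc _ _)
    refine .of_injOn (f := fun z ↦ (z.re, z.im)) (fun z hz ↦ ?_)
      (fun z _ w _ h ↦ Zsqrtd.ext (Prod.ext_iff.1 h).1 (Prod.ext_iff.1 h).2) box
    have norm_le : z.re.natAbs * z.re.natAbs + z.im.natAbs * z.im.natAbs ≤ b :=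
      (GaussianInt.natAbs_norm_eq z).symm.trans_le hz
    have re_le := Nat.le_mul_self z.re.natAbs
    have im_le := Nat.le_mul_self z.im.natAbs
    simp only [Set.mem_prod, Set.mem_Icc]
    omega

theorem finite_setOf_gaussianNorm_eq (m : ℕ) : {z | gaussianNorm z = m}.Finite :=
  (Northcott.finite_le (h := gaussianNorm) m).subset fun _ ↦ le_of_eq

theorem exists_ncard_gaussianNorm_eq_le {ε : ℝ} (hε : 0 < ε) :
    ∃ C : ℝ, 0 < C ∧ ∀ m : ℕ, m ≠ 0 →
      ({z | gaussianNorm z = m}.ncard : ℝ) ≤ C * (m : ℝ) ^ ε := by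
  obtain ⟨C, hC, hdvd⟩ := exists_ncard_setOf_dvd_le gaussianNorm (half_pos hε)
  refine ⟨C, hC, fun m hm ↦ ?_⟩
  have hm₀ : (m : ℤ[i]) ≠ 0 := mod_cast hm
  have dvd_of_norm_eq : {z | gaussianNorm z = m} ⊆ {z | z ∣ (m : ℤ[i])} := by
    rintro z rfl
    exact ⟨star z, by rw [← Zsqrtd.norm_eq_mul_conj, ← natCast_gaussianNorm, Int.cast_natCast]⟩
  have norm_natCast : (gaussianNorm m : ℝ) = (m : ℝ) ^ 2 := by simp [gaussianNorm_eq_norm_sq]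
  have := finite_units_of_northcott gaussianNorm
  calc ({z | gaussianNorm z = m}.ncard : ℝ) ≤ {z | z ∣ (m : ℤ[i])}.ncard :=
        mod_cast Set.ncard_le_ncard dvd_of_norm_eq (finite_setOf_dvd hm₀)
    _ ≤ C * ((m : ℝ) ^ 2) ^ (ε / 2) := norm_natCast ▸ hdvd m hm₀
    _ = C * (m : ℝ) ^ ε := by
        rw [← Real.rpow_natCast_mul m.cast_nonneg, Nat.cast_ofNat, mul_div_cancel₀ ε two_ne_zero]

/-- Over `ℂ`, the signed area of the triangle `a b c` times `4 i`. It clears the denominator of the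
circumcentre of a triangle of Gaussian integers. -/
def areaFactor {R : Type*} [CommRing R] [StarRing R] (a b c : R) : R :=
  star (b - a) * (c - a) - star (c - a) * (b - a)

theorem areaFactor_mul_center_sub {a b c p : ℂ} {r : ℝ} (ha : a ∈ sphere p r)
    (hb : b ∈ sphere p r) (hc : c ∈ sphere p r) :
    areaFactor a b c * (p - a) = (b - a) * (c - a) * star (b - c) := by
  have mul_conj_eq : ∀ {z}, z ∈ sphere p r → (z - p) * conj (z - p) = (r : ℂ) ^ 2 := by
    intro z hz
    rw [Complex.mul_conj', ← dist_eq_norm, mem_sphere.1 hz]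
  have ha' := mul_conj_eq ha
  have hb' := mul_conj_eq hb
  have hc' := mul_conj_eq hc
  simp only [areaFactor, starRingEnd_apply, star_sub] at ha' hb' hc' ⊢
  linear_combination (c - b) * ha' + (a - c) * hb' + (b - a) * hc'

theorem areaFactor_ne_zero_of_mem_sphere {a b c p : ℂ} {r : ℝ} (ha : a ∈ sphere p r)
    (hb : b ∈ sphere p r) (hc : c ∈ sphere p r) (hab : a ≠ b) (hac : a ≠ c) (hbc : b ≠ c) :
    areaFactor a b c ≠ 0 := by
  refine left_ne_zero_of_mul (b := p - a) ?_
  rw [areaFactor_mul_center_sub ha hb hc]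
  exact mul_ne_zero (mul_ne_zero (sub_ne_zero.2 hab.symm) (sub_ne_zero.2 hac.symm))
    (star_ne_zero.2 (sub_ne_zero.2 hbc))

/-- The Gaussian integer `areaFactor a b c * (n - p)`, where `p` is the circumcentre of `a b c`,
written without division. -/
def scaledOffset (a b c n : ℤ[i]) : ℤ[i] :=
  areaFactor a b c * (n - a) - (b - a) * (c - a) * star (b - c)

theorem injective_scaledOffset {a b c : ℤ[i]} (h : areaFactor a b c ≠ 0) :
    Function.Injective (scaledOffset a b c) :=
  fun n n' hn ↦ by simpa [scaledOffset, h] using hn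

theorem toComplex_areaFactor (a b c : ℤ[i]) :
    (areaFactor a b c : ℤ[i]) = areaFactor (a : ℂ) b c := by
  simp [areaFactor]

section ThreePoints

variable {a b c : ℤ[i]} {p : ℂ} {r : ℝ}

theorem toComplex_scaledOffset (ha : (a : ℂ) ∈ sphere p r) (hb : (b : ℂ) ∈ sphere p r)
    (hc : (c : ℂ) ∈ sphere p r) (n : ℤ[i]) :
    (scaledOffset a b c n : ℂ) = areaFactor (a : ℂ) b c * (n - p) := by
  have center := areaFactor_mul_center_sub ha hb hc
  simp only [scaledOffset, map_sub, map_mul, toComplex_areaFactor, GaussianInt.toComplex_star,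
    starRingEnd_apply] at center ⊢
  rw [star_sub] at center
  linear_combination center

theorem gaussianNorm_scaledOffset (ha : (a : ℂ) ∈ sphere p r) (hb : (b : ℂ) ∈ sphere p r)
    (hc : (c : ℂ) ∈ sphere p r) {n : ℤ[i]} (hn : (n : ℂ) ∈ sphere p r) :
    gaussianNorm (scaledOffset a b c n) =
      gaussianNorm (b - a) * gaussianNorm (c - a) * gaussianNorm (b - c) := by
  have norm_eq : ‖(scaledOffset a b c n : ℂ)‖ =
      ‖((b - a : ℤ[i]) : ℂ)‖ * ‖((c - a : ℤ[i]) : ℂ)‖ * ‖((b - c : ℤ[i]) : ℂ)‖ := by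
    calc ‖(scaledOffset a b c n : ℂ)‖ = ‖areaFactor (a : ℂ) b c * (p - a)‖ := by
          rw [toComplex_scaledOffset ha hb hc, norm_mul, norm_mul, ← dist_eq_norm, ← dist_eq_norm,
            mem_sphere.1 hn, dist_comm, mem_sphere.1 ha]
      _ = _ := by
          rw [areaFactor_mul_center_sub ha hb hc]
          simp only [norm_mul, norm_star, map_sub]
  have norm_sq_eq := congrArg (· ^ 2) norm_eq
  simp only [mul_pow, ← gaussianNorm_eq_norm_sq] at norm_sq_eq
  exact_mod_cast norm_sq_eq

theorem finite_and_ncard_sphere_le (ha : (a : ℂ) ∈ sphere p r) (hb : (b : ℂ) ∈ sphere p r)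
    (hc : (c : ℂ) ∈ sphere p r) (hab : a ≠ b) (hac : a ≠ c) (hbc : b ≠ c) :
    {n : ℤ[i] | (n : ℂ) ∈ sphere p r}.Finite ∧
      {n : ℤ[i] | (n : ℂ) ∈ sphere p r}.ncard ≤ {z | gaussianNorm z =
        gaussianNorm (b - a) * gaussianNorm (c - a) * gaussianNorm (b - c)}.ncard := by
  have mapsTo : Set.MapsTo (scaledOffset a b c) {n : ℤ[i] | (n : ℂ) ∈ sphere p r}
      {z | gaussianNorm z = gaussianNorm (b - a) * gaussianNorm (c - a) * gaussianNorm (b - c)} :=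
    fun n ↦ gaussianNorm_scaledOffset ha hb hc
  have area_ne_zero : areaFactor a b c ≠ 0 := by
    rw [← GaussianInt.toComplex_eq_zero.ne, toComplex_areaFactor]
    exact areaFactor_ne_zero_of_mem_sphere ha hb hc (by simpa) (by simpa) (by simpa)
  have inj := (injective_scaledOffset area_ne_zero).injOn
    (s := {n : ℤ[i] | (n : ℂ) ∈ sphere p r})
  have fin := finite_setOf_gaussianNorm_eq
    (gaussianNorm (b - a) * gaussianNorm (c - a) * gaussianNorm (b - c))
  exact ⟨.of_injOn mapsTo inj fin, Set.ncard_le_ncard_of_injOn _ mapsTo inj fin⟩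

end ThreePoints

theorem gaussianNorm_sub_le {a b : ℤ[i]} {x : ℂ} {R : ℝ} (ha : (a : ℂ) ∈ closedBall x R)
    (hb : (b : ℂ) ∈ closedBall x R) : (gaussianNorm (a - b) : ℝ) ≤ (2 * R) ^ 2 := by
  rw [gaussianNorm_eq_norm_sq, map_sub, ← dist_eq_norm]
  gcongr
  linarith [dist_triangle_right (a : ℂ) b x, mem_closedBall.1 ha, mem_closedBall.1 hb]

theorem gaussianNorm_sides_le {a b c : ℤ[i]} {x : ℂ} {R : ℝ} (ha : (a : ℂ) ∈ closedBall x R)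
    (hb : (b : ℂ) ∈ closedBall x R) (hc : (c : ℂ) ∈ closedBall x R) :
    ((gaussianNorm (b - a) * gaussianNorm (c - a) * gaussianNorm (b - c) : ℕ) : ℝ) ≤
      (2 * R) ^ 6 := by
  calc _ ≤ (2 * R) ^ 2 * (2 * R) ^ 2 * (2 * R) ^ 2 := by
        push_cast
        gcongr
        exacts [gaussianNorm_sub_le hb ha, gaussianNorm_sub_le hc ha, gaussianNorm_sub_le hb hc]
    _ = (2 * R) ^ 6 := by ring

theorem gaussianNorm_ne_zero {z : ℤ[i]} (hz : z ≠ 0) : gaussianNorm z ≠ 0 :=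
  Int.natAbs_ne_zero.2 (mt GaussianInt.norm_eq_zero.1 hz)

theorem exists_ncard_sphere_inter_closedBall_le {η : ℝ} (hη : 0 < η) :
    ∃ C : ℝ, 0 < C ∧ ∀ (p : ℂ) (r : ℝ) (x : ℂ) (R : ℝ), 1 ≤ R →
      {n : ℤ[i] | (n : ℂ) ∈ sphere p r ∩ closedBall x R}.Finite ∧
        ({n : ℤ[i] | (n : ℂ) ∈ sphere p r ∩ closedBall x R}.ncard : ℝ) ≤ C * R ^ η := by
  obtain ⟨C, hC, hcard⟩ := exists_ncard_gaussianNorm_eq_le (ε := η / 6) (by positivity)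
  refine ⟨max 2 (C * 2 ^ η), by positivity, fun p r x R hR ↦ ?_⟩
  set A := {n : ℤ[i] | (n : ℂ) ∈ sphere p r ∩ closedBall x R}
  by_cases few : A.encard ≤ (2 : ℕ)
  · obtain ⟨fin, card_le⟩ := Set.encard_le_coe_iff_finite_ncard_le.1 few
    refine ⟨fin, ?_⟩
    calc (A.ncard : ℝ) ≤ 2 * 1 := by rw [mul_one]; exact_mod_cast card_le
      _ ≤ max 2 (C * 2 ^ η) * R ^ η := by
        gcongr
        exacts [le_max_left _ _, Real.one_le_rpow hR hη.le]
  obtain ⟨t, htA, ht⟩ := Set.exists_subset_encard_eq (Order.add_one_le_of_lt (not_le.1 few))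
  obtain ⟨a, b, c, hab, hac, hbc, rfl⟩ := Set.encard_eq_three.1 ht
  have ha : a ∈ A := htA (by simp)
  have hb : b ∈ A := htA (by simp)
  have hc : c ∈ A := htA (by simp)
  obtain ⟨fin, card_le⟩ := finite_and_ncard_sphere_le ha.1 hb.1 hc.1 hab hac hbc
  have hA : A ⊆ {n : ℤ[i] | (n : ℂ) ∈ sphere p r} := fun n hn ↦ hn.1
  refine ⟨fin.subset hA, ?_⟩
  set m := gaussianNorm (b - a) * gaussianNorm (c - a) * gaussianNorm (b - c)
  have hm : m ≠ 0 := by simp [m, gaussianNorm_ne_zero, sub_eq_zero, hab.symm, hac.symm, hbc]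
  have m_le : (m : ℝ) ≤ (2 * R) ^ 6 := gaussianNorm_sides_le ha.2 hb.2 hc.2
  calc (A.ncard : ℝ) ≤ {z | gaussianNorm z = m}.ncard :=
        mod_cast (Set.ncard_le_ncard hA fin).trans card_le
    _ ≤ C * (m : ℝ) ^ (η / 6) := hcard m hm
    _ ≤ C * ((2 * R) ^ 6) ^ (η / 6) := by gcongr
    _ = C * 2 ^ η * R ^ η := by
        rw [← Real.rpow_natCast_mul (by positivity), Nat.cast_ofNat, mul_div_cancel₀ η (by simp),
          Real.mul_rpow zero_le_two (by positivity), mul_assoc]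
    _ ≤ max 2 (C * 2 ^ η) * R ^ η := by gcongr; exact le_max_right _ _

/-- The lattice point `(x, y)` as the Gaussian integer `x + i y`. -/
def toGaussianInt (n : ℤ × ℤ) : ℤ[i] := ⟨n.1, n.2⟩

theorem toGaussianInt_injective : Function.Injective toGaussianInt :=
  fun _ _ h ↦ Prod.ext (congrArg Zsqrtd.re h) (congrArg Zsqrtd.im h)

theorem mapsTo_toGaussianInt (p : ℝ × ℝ) (μ : ℝ) (x : ℝ × ℝ) {R : ℝ} (hR : 0 ≤ R) :
    Set.MapsTo toGaussianInt
      {n | ((n.1 : ℝ) - p.1) ^ 2 + ((n.2 : ℝ) - p.2) ^ 2 = μ ∧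
        ((n.1 : ℝ) - x.1) ^ 2 + ((n.2 : ℝ) - x.2) ^ 2 ≤ R ^ 2}
      {z | (z : ℂ) ∈ sphere ⟨p.1, p.2⟩ √μ ∩ closedBall ⟨x.1, x.2⟩ R} := by
  rintro n ⟨on_circle, in_ball⟩
  simp only [toGaussianInt, GaussianInt.toComplex_def₂, Set.mem_ofPred_eq, Set.mem_inter_iff,
    mem_sphere, mem_closedBall, Complex.dist_eq_re_im]
  exact ⟨congrArg _ on_circle, Real.sqrt_le_iff.2 ⟨hR, in_ball⟩⟩

end CircleInBall

theorem lattice_points_on_circle_in_ball_general (η : ℝ) (hη : 0 < η) :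
    ∃ C : ℝ, 0 < C ∧ ∀ (p : ℝ × ℝ) (μ : ℝ) (x₀ : ℝ × ℝ) (R : ℝ), 1 ≤ R →
      {n : ℤ × ℤ | ((n.1 : ℝ) - p.1) ^ 2 + ((n.2 : ℝ) - p.2) ^ 2 = μ ∧
        ((n.1 : ℝ) - x₀.1) ^ 2 + ((n.2 : ℝ) - x₀.2) ^ 2 ≤ R ^ 2}.Finite ∧
      ({n : ℤ × ℤ | ((n.1 : ℝ) - p.1) ^ 2 + ((n.2 : ℝ) - p.2) ^ 2 = μ ∧
        ((n.1 : ℝ) - x₀.1) ^ 2 + ((n.2 : ℝ) - x₀.2) ^ 2 ≤ R ^ 2}.ncard : ℝ) ≤ C * R ^ η := by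
  obtain ⟨C, hC, hcard⟩ := CircleInBall.exists_ncard_sphere_inter_closedBall_le hη
  refine ⟨C, hC, fun p μ x₀ R hR ↦ ?_⟩
  obtain ⟨fin, card_le⟩ := hcard ⟨p.1, p.2⟩ √μ ⟨x₀.1, x₀.2⟩ R hR
  have mapsTo := CircleInBall.mapsTo_toGaussianInt p μ x₀ (zero_le_one.trans hR)
  have inj := CircleInBall.toGaussianInt_injective
  exact ⟨.of_injOn mapsTo inj.injOn fin, le_trans
    (mod_cast Set.ncard_le_ncard_of_injOn _ mapsTo inj.injOn fin) card_le⟩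

/-- For every `η > 0` there exists `C > 0` such that for every `n₀ ∈ ℤ²`,
every real `μ ≥ 0`, every point `x₀ ∈ ℝ²`, and every radius `R > 1`, the number of lattice
points `n ∈ ℤ²` with `|n - n₀|² = μ` and `|n - x₀| ≤ R` is at most `C * R ^ η`. -/
theorem lattice_points_on_circle_in_ball (η : ℝ) (hη : 0 < η) :
    ∃ C : ℝ, 0 < C ∧
      ∀ (n₀ : ℤ × ℤ) (μ : ℝ), 0 ≤ μ → ∀ (x₀ : ℝ × ℝ) (R : ℝ), 1 < R →
        ({n : ℤ × ℤ |
            ((n.1 : ℝ) - (n₀.1 : ℝ)) ^ 2 + ((n.2 : ℝ) - (n₀.2 : ℝ)) ^ 2 = μ ∧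
            ((n.1 : ℝ) - x₀.1) ^ 2 + ((n.2 : ℝ) - x₀.2) ^ 2 ≤ R ^ 2}).Finite ∧
        (({n : ℤ × ℤ |
            ((n.1 : ℝ) - (n₀.1 : ℝ)) ^ 2 + ((n.2 : ℝ) - (n₀.2 : ℝ)) ^ 2 = μ ∧
            ((n.1 : ℝ) - x₀.1) ^ 2 + ((n.2 : ℝ) - x₀.2) ^ 2 ≤ R ^ 2}).ncard : ℝ)
          ≤ C * R ^ η := by
  obtain ⟨C, hC, hcard⟩ := lattice_points_on_circle_in_ball_general η hη
  exact ⟨C, hC, fun n₀ μ _ x₀ R hR ↦ hcard (n₀.1, n₀.2) μ x₀ R hR.le⟩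
end

section
/- Let ε > 0. Then there exists C > 0 such that for all powers of two N, N₁, N₂, N₃ ≥ 1, every integer μ, and all nonnegative sequences ω⁽¹⁾, ω⁽²⁾, ω⁽³⁾ : ℤ² → [0,∞), one has ( Σ_{n ∈ ℤ², N ≤ ⟨n⟩ < 2N} ( Σ_{(n₁,n₂,n₃) ∈ (ℤ²)³ : n₁ − n₂ + n₃ = n, Φ(n,n₁,n₂,n₃) = μ, N_j ≤ ⟨n_j⟩ < 2N_j for j = 1,2,3} ω⁽¹⁾_{n₁} ω⁽²⁾_{n₂} ω⁽³⁾_{n₃} )² )^{1/2} ≤ C (N_med · N_min)^ε ∏_{j=1}^{3} ( Σ_{n_j ∈ ℤ², N_j ≤ ⟨n_j⟩ < 2N_j} (ω⁽ʲ⁾_{n_j})² )^{1/2}, where N_med and N_min denote the median and the minimum of {N₁, N₂, N₃}. -/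
open scoped ENNReal NNReal

/-- `⟨n⟩ = (1+|n|²)^{1/2}` for `n ∈ ℤ²`. -/
noncomputable def jbZ2 (n : ℤ × ℤ) : ℝ := Real.sqrt (1 + ((n.1 : ℝ) ^ 2 + (n.2 : ℝ) ^ 2))

/-- `Φ(n,n₁,n₂,n₃) = |n|² - |n₁|² + |n₂|² - |n₃|²`. -/
def PhiZ2 (n n₁ n₂ n₃ : ℤ × ℤ) : ℤ :=
  (n.1 ^ 2 + n.2 ^ 2) - (n₁.1 ^ 2 + n₁.2 ^ 2) + (n₂.1 ^ 2 + n₂.2 ^ 2) - (n₃.1 ^ 2 + n₃.2 ^ 2)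

/-- Dyadic localization `N ≤ ⟨n⟩ < 2N`. -/
def dyadicZ2 (N : ℝ) (n : ℤ × ℤ) : Prop := N ≤ jbZ2 n ∧ jbZ2 n < 2 * N

/-!
By duality the estimate concerns a quadrilinear sum over `n - n₁ + n₂ - n₃ = 0`, `Φ = μ`, that is,
over solutions of one linear equation on the paraboloid `{(x, |x|²)}`. Cauchy–Schwarz splits this
sum into two additive energies, each of a pair of functions. Those energies are controlled by the
number of pairs with a given sum on the paraboloid, and the differences of such pairs lie on a
circle. If one function of the pair lives in a disc of radius `N`, all these differences lie within
`O(N)` of each other. A circle of radius at most `N³` has `O(N^ε)` lattice points by the divisor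
bound in `ℤ[i]`, and on a larger circle at most two lattice points are that close, since
`abc = 4 · area · R` for a triangle inscribed in a circle of radius `R`. So an energy costs only
`N^ε` with `N` the size of *either* of its two supports; pairing the output frequency with one of
the two smaller input frequencies leaves the other one in the second energy, for a total of
`(N_med N_min)^ε`.
-/

section CoprimeSubmultiplicative

lemma exists_mul_succ_pow_le_mul_pow (A : ℝ) (m : ℕ) {r : ℝ} (hr : 1 < r) :
    ∃ B : ℝ, 1 ≤ B ∧ ∀ k : ℕ, A * ((k : ℝ) + 1) ^ m ≤ B * r ^ k := by
  obtain ⟨C, _, hbound⟩ := Asymptotics.bound_of_isBigO_nat_atTop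
    (isLittleO_pow_const_const_pow_of_one_lt (R := ℝ) m hr).isBigO
  refine ⟨max 1 (|A| * (C * r)), le_max_left _ _, fun k => ?_⟩
  have hk : ((k : ℝ) + 1) ^ m ≤ C * r * r ^ k := by
    have := hbound (x := k + 1) (by positivity)
    rw [Real.norm_of_nonneg (by positivity), Real.norm_of_nonneg (by positivity)] at this
    calc ((k : ℝ) + 1) ^ m ≤ C * r ^ (k + 1) := by exact_mod_cast this
      _ = C * r * r ^ k := by ring
  calc A * ((k : ℝ) + 1) ^ m ≤ |A| * (C * r * r ^ k) := by gcongr; exact le_abs_self A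
    _ = |A| * (C * r) * r ^ k := by ring
    _ ≤ max 1 (|A| * (C * r)) * r ^ k := by gcongr; exact le_max_right _ _

lemma mul_succ_pow_le_pow {A q : ℝ} {m k : ℕ} (hA : 1 ≤ A) (hq : A * 2 ^ m ≤ q) (hk : k ≠ 0) :
    A * ((k : ℝ) + 1) ^ m ≤ q ^ k := by
  have hk2 : (k : ℝ) + 1 ≤ 2 ^ k := by exact_mod_cast Nat.lt_two_pow_self (n := k)
  calc A * ((k : ℝ) + 1) ^ m ≤ A ^ k * (2 ^ k) ^ m := by gcongr; exact le_self_pow₀ hA hk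
    _ = (A * 2 ^ m) ^ k := by rw [mul_pow, ← pow_mul, ← pow_mul, mul_comm k m]
    _ ≤ q ^ k := by gcongr

lemma exists_mul_succ_pow_le_prime_pow_rpow {A : ℝ} (hA : 1 ≤ A) (m : ℕ) {δ : ℝ} (hδ : 0 < δ) :
    ∃ (B : ℝ) (P : ℕ), 1 ≤ B ∧ ∀ p k : ℕ, p.Prime → k ≠ 0 →
      A * ((k : ℝ) + 1) ^ m ≤ (if p < P then B else 1) * ((p ^ k : ℕ) : ℝ) ^ δ := by
  obtain ⟨B, hB, hsmall⟩ :=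
    exists_mul_succ_pow_le_mul_pow A m (Real.one_lt_rpow one_lt_two hδ)
  obtain ⟨P, hlarge⟩ := (((tendsto_rpow_atTop hδ).comp
    tendsto_natCast_atTop_atTop).eventually_ge_atTop (A * 2 ^ m)).exists_forall_of_atTop
  refine ⟨B, P, hB, fun p k hp hk => ?_⟩
  rw [Nat.cast_pow, ← Real.rpow_pow_comm p.cast_nonneg]
  split_ifs with hpP
  · have h2p : (2 : ℝ) ≤ p := by exact_mod_cast hp.two_le
    exact (hsmall k).trans (by gcongr)
  · rw [one_mul]
    exact mul_succ_pow_le_pow hA (hlarge p (not_lt.1 hpP)) hk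

theorem exists_le_mul_rpow_of_coprime_mul_le {f : ℕ → ℝ} {A : ℝ} {m : ℕ} (hf : ∀ n, 0 ≤ f n)
    (hA : 1 ≤ A) (hmul : ∀ a b, Nat.Coprime a b → f (a * b) ≤ f a * f b)
    (hpow : ∀ p k : ℕ, p.Prime → f (p ^ k) ≤ A * ((k : ℝ) + 1) ^ m) {δ : ℝ} (hδ : 0 < δ) :
    ∃ C : ℝ, 0 < C ∧ ∀ n : ℕ, n ≠ 0 → f n ≤ C * (n : ℝ) ^ δ := by
  obtain ⟨B, P, hB, hBP⟩ := exists_mul_succ_pow_le_prime_pow_rpow hA m hδ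
  have key (n : ℕ) : 1 < n →
      f n ≤ (∏ p ∈ n.primeFactors, if p < P then B else 1) * (n : ℝ) ^ δ := by
    induction n using Nat.recOnPosPrimePosCoprime with
    | zero | one => intro h; omega
    | prime_pow p k hp hk =>
      intro _
      rw [Nat.primeFactors_prime_pow hk.ne' hp, Finset.prod_singleton]
      exact (hpow p k hp).trans (hBP p k hp hk.ne')
    | coprime a b ha hb hab iha ihb =>
      intro _
      rw [hab.primeFactors_mul, Finset.prod_union hab.disjoint_primeFactors, Nat.cast_mul,
        Real.mul_rpow a.cast_nonneg b.cast_nonneg, mul_mul_mul_comm]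
      exact (hmul a b hab).trans
        (mul_le_mul (iha ha) (ihb hb) (hf b) ((hf a).trans (iha ha)))
  have hprod (n : ℕ) : (∏ p ∈ n.primeFactors, if p < P then B else 1) ≤ B ^ P := by
    rw [Finset.prod_ite, Finset.prod_const, Finset.prod_const_one, mul_one]
    refine pow_le_pow_right₀ hB ((Finset.card_le_card fun p hp => ?_).trans_eq
      (Finset.card_range P))
    exact Finset.mem_range.2 (Finset.mem_filter.1 hp).2
  refine ⟨A * B ^ P, by positivity, fun n hn => ?_⟩
  obtain rfl | hn1 := eq_or_ne n 1
  · have h1 : f 1 ≤ A := by simpa using hpow 2 0 Nat.prime_two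
    rw [Nat.cast_one, Real.one_rpow, mul_one]
    exact h1.trans (le_mul_of_one_le_right (by positivity) (one_le_pow₀ hB))
  · calc f n ≤ B ^ P * (n : ℝ) ^ δ := (key n (by omega)).trans (by gcongr; exact hprod n)
      _ ≤ A * B ^ P * (n : ℝ) ^ δ := by gcongr; exact le_mul_of_one_le_left (by positivity) hA

end CoprimeSubmultiplicative

section GaussianNorm

/-- The Gaussian integers of norm `n`, i.e. the lattice points on the circle of radius `√n`,
as the trace on that circle of the box `[-n, n]²`. -/
noncomputable def gaussianSphere (n : ℕ) : Finset GaussianInt :=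
  ((Finset.Icc (-n : ℤ) n ×ˢ Finset.Icc (-n : ℤ) n).image
    fun p => (⟨p.1, p.2⟩ : GaussianInt)).filter fun z => z.norm = n

lemma mem_gaussianSphere {n : ℕ} {z : GaussianInt} : z ∈ gaussianSphere n ↔ z.norm = n := by
  refine Finset.mem_filter.trans (and_iff_right_of_imp fun hz => Finset.mem_image.2
    ⟨(z.re, z.im), Finset.mem_product.2 ⟨Finset.mem_Icc.2 ?_, Finset.mem_Icc.2 ?_⟩, rfl⟩)
  all_goals
    rw [Zsqrtd.norm_def] at hz
    refine abs_le.1 ((Int.abs_eq_natAbs _).trans_le ((Int.natAbs_le_self_sq _).trans ?_))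
    nlinarith [sq_nonneg z.re, sq_nonneg z.im]

lemma card_gaussianSphere_one : (gaussianSphere 1).card = 4 := by
  unfold gaussianSphere
  decide

lemma dvd_natCast_of_norm_eq {n : ℕ} {z : GaussianInt} (hz : z.norm = n) :
    z ∣ (n : GaussianInt) :=
  ⟨star z, by rw [← Zsqrtd.norm_eq_mul_conj, hz, Int.cast_natCast]⟩

lemma natAbs_norm_dvd_sq {n : ℕ} {z : GaussianInt} (hz : z ∣ (n : GaussianInt)) :
    z.norm.natAbs ∣ n ^ 2 := by
  have := map_dvd Zsqrtd.normMonoidHom hz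
  have h : z.norm ∣ (n : ℤ) * n := by simpa [Zsqrtd.normMonoidHom] using this
  rw [sq, ← Int.natCast_dvd_natCast, Int.natAbs_dvd]
  exact_mod_cast h

lemma eq_and_eq_of_mul_eq_mul_of_dvd_sq {a b x y : ℕ} (hab : a.Coprime b) (hx : x ∣ a ^ 2)
    (hy : y ∣ b ^ 2) (hxy : x * y = a * b) : x = a ∧ y = b := by
  have hxb : x.Coprime b := (hab.pow_left 2).coprime_dvd_left hx
  have hya : y.Coprime a := (hab.symm.pow_left 2).coprime_dvd_left hy
  exact ⟨(hxb.dvd_of_dvd_mul_right (hxy ▸ dvd_mul_right x y)).antisymm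
      (hya.symm.dvd_of_dvd_mul_right (hxy ▸ dvd_mul_right a b)),
    (hya.dvd_of_dvd_mul_left (hxy ▸ dvd_mul_left y x)).antisymm
      (hxb.symm.dvd_of_dvd_mul_left (hxy ▸ dvd_mul_left b a))⟩

lemma card_gaussianSphere_mul_le {a b : ℕ} (hab : a.Coprime b) :
    (gaussianSphere (a * b)).card ≤ (gaussianSphere a).card * (gaussianSphere b).card := by
  classical
  have hsub : gaussianSphere (a * b) ⊆
      (gaussianSphere a ×ˢ gaussianSphere b).image fun p => p.1 * p.2 := by
    intro z hz
    have hnorm : z.norm = (a * b : ℕ) := mem_gaussianSphere.1 hz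
    have hdvd : z ∣ (a : GaussianInt) * b := by simpa using dvd_natCast_of_norm_eq hnorm
    obtain ⟨u, v, hu, hv, rfl⟩ := exists_dvd_and_dvd_of_dvd_mul hdvd
    obtain ⟨hua, hvb⟩ := eq_and_eq_of_mul_eq_mul_of_dvd_sq hab (natAbs_norm_dvd_sq hu)
      (natAbs_norm_dvd_sq hv)
      (by rw [← Int.natAbs_mul, ← Zsqrtd.norm_mul, hnorm, Int.natAbs_natCast])
    refine Finset.mem_image.2 ⟨(u, v), Finset.mem_product.2
      ⟨mem_gaussianSphere.2 ?_, mem_gaussianSphere.2 ?_⟩, rfl⟩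
    · rw [← hua, Int.natAbs_of_nonneg (GaussianInt.norm_nonneg u)]
    · rw [← hvb, Int.natAbs_of_nonneg (GaussianInt.norm_nonneg v)]
  calc (gaussianSphere (a * b)).card ≤ _ := (Finset.card_le_card hsub).trans Finset.card_image_le
    _ = (gaussianSphere a).card * (gaussianSphere b).card := Finset.card_product _ _

lemma prime_of_prime_norm {z : GaussianInt} (hz : Prime z.norm) : Prime z := by
  have : IsLocalHom (Zsqrtd.normMonoidHom (d := -1)) :=
    ⟨fun _ => (Zsqrtd.isUnit_iff_norm_isUnit _).2⟩
  exact (Irreducible.of_map (f := Zsqrtd.normMonoidHom) hz.irreducible).prime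

lemma exists_prime_prime_dvd_mul {p : ℕ} (hp : p.Prime) :
    ∃ π σ : GaussianInt, Prime π ∧ Prime σ ∧ (p : GaussianInt) ∣ π * σ := by
  have := Fact.mk hp
  by_cases h : p % 4 = 3
  · have hprime := GaussianInt.prime_of_nat_prime_of_mod_four_eq_three p h
    exact ⟨p, p, hprime, hprime, dvd_mul_right _ _⟩
  · obtain ⟨a, b, hab⟩ := Nat.Prime.sq_add_sq h
    have hnorm : (⟨a, b⟩ : GaussianInt).norm = p := by
      rw [Zsqrtd.norm_def, ← hab]; push_cast; ring
    have hprime : Prime (p : ℤ) := Nat.prime_iff_prime_int.1 hp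
    refine ⟨⟨a, b⟩, star ⟨a, b⟩, prime_of_prime_norm (hnorm ▸ hprime),
      prime_of_prime_norm (by rwa [Zsqrtd.norm_conj, hnorm]), ?_⟩
    rw [← Zsqrtd.norm_eq_mul_conj, hnorm, Int.cast_natCast]

lemma card_gaussianSphere_prime_pow_le {p : ℕ} (hp : p.Prime) (k : ℕ) :
    (gaussianSphere (p ^ k)).card ≤ 4 * (k + 1) ^ 2 := by
  classical
  obtain ⟨π, σ, hπ, hσ, hdvd⟩ := exists_prime_prime_dvd_mul hp
  have hsub : gaussianSphere (p ^ k) ⊆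
      (gaussianSphere 1 ×ˢ Finset.range (k + 1) ×ˢ Finset.range (k + 1)).image
        fun q => π ^ q.2.1 * σ ^ q.2.2 * q.1 := by
    intro z hz
    have hzdvd : z ∣ π ^ k * σ ^ k := by
      rw [← mul_pow]
      exact (dvd_natCast_of_norm_eq (mem_gaussianSphere.1 hz)).trans
        (by simpa using pow_dvd_pow_of_dvd hdvd k)
    obtain ⟨u, v, hu, hv, rfl⟩ := exists_dvd_and_dvd_of_dvd_mul hzdvd
    obtain ⟨i, hik, hi⟩ := (dvd_prime_pow hπ k).1 hu
    obtain ⟨j, hjk, hj⟩ := (dvd_prime_pow hσ k).1 hv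
    obtain ⟨c, hc⟩ := (hi.mul_mul hj).symm
    have hcnorm : (c : GaussianInt).norm = (1 : ℕ) := by
      simpa using (Zsqrtd.norm_eq_one_iff' (by norm_num) (c : GaussianInt)).2 c.isUnit
    refine Finset.mem_image.2 ⟨(c, i, j), ?_, hc⟩
    simp only [Finset.mem_product, Finset.mem_range, mem_gaussianSphere]
    exact ⟨hcnorm, by omega, by omega⟩
  refine (Finset.card_le_card hsub).trans (Finset.card_image_le.trans_eq ?_)
  rw [Finset.card_product, Finset.card_product, Finset.card_range, card_gaussianSphere_one, sq]

theorem exists_card_gaussianSphere_le {δ : ℝ} (hδ : 0 < δ) :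
    ∃ C : ℝ, 0 < C ∧ ∀ n : ℕ, n ≠ 0 → ((gaussianSphere n).card : ℝ) ≤ C * (n : ℝ) ^ δ :=
  exists_le_mul_rpow_of_coprime_mul_le (fun _ => Nat.cast_nonneg _)
    (by norm_num : (1 : ℝ) ≤ 4)
    (fun _ _ hab => by exact_mod_cast card_gaussianSphere_mul_le hab)
    (fun _ k hp => by exact_mod_cast card_gaussianSphere_prime_pow_le hp k) hδ

end GaussianNorm

section ShortArcs

/-- The squared Euclidean norm `|z|²` of a lattice point, kept integer-valued so that the points
of a circle can be counted arithmetically. -/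
def sqNorm (z : ℤ × ℤ) : ℤ := z.1 ^ 2 + z.2 ^ 2

lemma sqNorm_nonneg (z : ℤ × ℤ) : 0 ≤ sqNorm z := by
  unfold sqNorm; positivity

lemma sqNorm_pos {z : ℤ × ℤ} (hz : z ≠ 0) : 0 < sqNorm z := by
  refine (sqNorm_nonneg z).lt_of_ne' fun h => hz ?_
  obtain ⟨h₁, h₂⟩ := (add_eq_zero_iff_of_nonneg (sq_nonneg z.1) (sq_nonneg z.2)).1 h
  exact Prod.ext (pow_eq_zero_iff two_ne_zero |>.1 h₁) (pow_eq_zero_iff two_ne_zero |>.1 h₂)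

lemma sqNorm_sub_eq (x y : ℤ × ℤ) :
    sqNorm (x - y) = 2 * (sqNorm x + sqNorm y) - sqNorm (x + y) := by
  simp only [sqNorm, Prod.fst_sub, Prod.snd_sub, Prod.fst_add, Prod.snd_add]; ring

-- The identity `abc = 4 · area · R` for a triangle with sides `a, b, c` and circumradius `R`,
-- squared.
lemma sqNorm_sub_mul_sqNorm_sub_mul_sqNorm_sub {x y z : ℤ × ℤ} {M : ℤ} (hx : sqNorm x = M)
    (hy : sqNorm y = M) (hz : sqNorm z = M) :
    sqNorm (y - x) * sqNorm (z - x) * sqNorm (y - z) =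
      4 * M * ((y.1 - x.1) * (z.2 - x.2) - (y.2 - x.2) * (z.1 - x.1)) ^ 2 := by
  simp only [sqNorm, Prod.fst_sub, Prod.snd_sub] at *
  grind

lemma pos_and_le_pow_three_of_sqNorm_eq {x y z : ℤ × ℤ} {M : ℤ} {D : ℝ} (hxy : x ≠ y)
    (hxz : x ≠ z) (hyz : y ≠ z) (hx : sqNorm x = M) (hy : sqNorm y = M) (hz : sqNorm z = M)
    (hyxD : (sqNorm (y - x) : ℝ) ≤ D) (hzxD : (sqNorm (z - x) : ℝ) ≤ D)
    (hyzD : (sqNorm (y - z) : ℝ) ≤ D) : 0 < M ∧ (M : ℝ) ≤ D ^ 3 := by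
  have hprod := sqNorm_sub_mul_sqNorm_sub_mul_sqNorm_sub hx hy hz
  set area := (y.1 - x.1) * (z.2 - x.2) - (y.2 - x.2) * (z.1 - x.1)
  have hyx0 := sqNorm_pos (sub_ne_zero.2 hxy.symm)
  have hzx0 := sqNorm_pos (sub_ne_zero.2 hxz.symm)
  have hyz0 := sqNorm_pos (sub_ne_zero.2 hyz)
  have hpos : 0 < 4 * M * area ^ 2 := hprod ▸ mul_pos (mul_pos hyx0 hzx0) hyz0
  have hM : 0 < M := by
    have := pos_of_mul_pos_left hpos (sq_nonneg area)
    omega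
  have harea : 1 ≤ area ^ 2 := pos_of_mul_pos_right hpos (by omega)
  refine ⟨hM, ?_⟩
  have hMprod : M ≤ sqNorm (y - x) * sqNorm (z - x) * sqNorm (y - z) := by
    rw [hprod]; nlinarith
  calc (M : ℝ) ≤ sqNorm (y - x) * sqNorm (z - x) * sqNorm (y - z) := by exact_mod_cast hMprod
    _ ≤ D * D * D := by
      have : (0 : ℝ) < sqNorm (y - x) := by exact_mod_cast hyx0
      have : (0 : ℝ) < sqNorm (z - x) := by exact_mod_cast hzx0
      have : (0 : ℝ) < sqNorm (y - z) := by exact_mod_cast hyz0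
      have : 0 < D := by linarith
      gcongr
    _ = D ^ 3 := by ring

lemma card_le_card_gaussianSphere {s : Finset (ℤ × ℤ)} {n : ℕ} (hs : ∀ z ∈ s, sqNorm z = n) :
    s.card ≤ (gaussianSphere n).card := by
  refine Finset.card_le_card_of_injOn (fun z => (⟨z.1, z.2⟩ : GaussianInt)) (fun z hz => ?_) ?_
  · rw [Finset.mem_coe, mem_gaussianSphere, Zsqrtd.norm_def, ← hs z hz, sqNorm]
    ring
  · intro z _ w _ hzw
    simp only [Zsqrtd.mk.injEq] at hzw
    exact Prod.ext hzw.1 hzw.2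

-- Three points that are close together force the radius to be small, after which the divisor
-- bound for the full circle applies.
theorem exists_card_le_of_sqNorm_eq {δ : ℝ} (hδ : 0 < δ) :
    ∃ C : ℝ, 0 < C ∧ ∀ (s : Finset (ℤ × ℤ)) (M : ℤ) (D : ℝ), 1 ≤ D → (∀ z ∈ s, sqNorm z = M) →
      (∀ z ∈ s, ∀ w ∈ s, (sqNorm (z - w) : ℝ) ≤ D) → (s.card : ℝ) ≤ C * D ^ δ := by
  obtain ⟨C, hC, hcard⟩ := exists_card_gaussianSphere_le (δ := δ / 3) (by positivity)
  refine ⟨max 2 C, by positivity, fun s M D hD hM hs => ?_⟩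
  obtain hs2 | hs2 := le_or_gt s.card 2
  · calc (s.card : ℝ) ≤ 2 := by exact_mod_cast hs2
      _ ≤ max 2 C * D ^ δ := by
        exact (le_max_left 2 C).trans
          (le_mul_of_one_le_right (by positivity) (Real.one_le_rpow hD hδ.le))
  · obtain ⟨x, hx, y, hy, z, hz, hxy, hxz, hyz⟩ := Finset.two_lt_card.1 hs2
    obtain ⟨hM0, hMD⟩ := pos_and_le_pow_three_of_sqNorm_eq hxy hxz hyz (hM x hx) (hM y hy)
      (hM z hz) (hs y hy x hx) (hs z hz x hx) (hs y hy z hz)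
    lift M to ℕ using hM0.le
    have hMD : (M : ℝ) ≤ D ^ 3 := by exact_mod_cast hMD
    calc (s.card : ℝ) ≤ (gaussianSphere M).card := by
          exact_mod_cast card_le_card_gaussianSphere hM
      _ ≤ C * (M : ℝ) ^ (δ / 3) := hcard M (by omega)
      _ ≤ C * (D ^ 3) ^ (δ / 3) := by gcongr
      _ = C * D ^ δ := by
        rw [← Real.rpow_natCast, ← Real.rpow_mul (by positivity)]
        congr 2; push_cast; ring
      _ ≤ max 2 C * D ^ δ := by gcongr; exact le_max_right 2 C

end ShortArcs

section SquareSummable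

variable {ι : Type*}

lemma tsum_mul_sq_le_tsum_sq_mul_tsum_sq (f g : ι → ℝ≥0∞) :
    (∑' i, f i * g i) ^ 2 ≤ (∑' i, f i ^ 2) * ∑' i, g i ^ 2 := by
  have hsqrt : ∑' i, f i * g i ≤ ((∑' i, f i ^ 2) * ∑' i, g i ^ 2) ^ (1 / 2 : ℝ) := by
    rw [ENNReal.tsum_eq_iSup_sum]
    refine iSup_le fun s => (ENNReal.inner_le_Lp_mul_Lq s f g .two_two).trans ?_
    rw [← ENNReal.mul_rpow_of_nonneg _ _ (by norm_num)]
    simp only [ENNReal.rpow_two]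
    gcongr <;> exact ENNReal.sum_le_tsum s
  calc (∑' i, f i * g i) ^ 2
      ≤ (((∑' i, f i ^ 2) * ∑' i, g i ^ 2) ^ (1 / 2 : ℝ)) ^ 2 := by gcongr
    _ = (∑' i, f i ^ 2) * ∑' i, g i ^ 2 := by
      rw [← ENNReal.rpow_two, ← ENNReal.rpow_mul]; norm_num

lemma tsum_sq_le_of_forall_tsum_mul_sq_le {F : ι → ℝ≥0∞} {A : ℝ≥0∞}
    (h : ∀ w : ι → ℝ≥0∞, (∑' i, w i * F i) ^ 2 ≤ A * ∑' i, w i ^ 2) : ∑' i, F i ^ 2 ≤ A := by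
  classical
  obtain rfl | hA := eq_or_ne A ∞
  · exact le_top
  have hF (i : ι) : F i ≠ ∞ := by
    have hi := h (Pi.single i 1)
    rw [tsum_eq_single i (by simp +contextual), tsum_eq_single i (by simp +contextual)] at hi
    simp only [Pi.single_eq_same, one_mul, one_pow, mul_one] at hi
    exact fun htop => hA (top_unique (by simpa [htop] using hi))
  rw [ENNReal.tsum_eq_iSup_sum]
  refine iSup_le fun s => ?_
  set X := ∑ i ∈ s, F i ^ 2
  have hX : X ≠ ∞ := ENNReal.sum_ne_top.2 fun i _ => ENNReal.pow_ne_top (hF i)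
  have hXX : X * X ≤ A * X := by
    have hs := h fun i => if i ∈ s then F i else 0
    simp only [ite_mul, zero_mul, ite_pow, ne_eq, OfNat.ofNat_ne_zero, not_false_eq_true,
      zero_pow, ← sq] at hs
    have hsum : ∑' i, (if i ∈ s then F i ^ 2 else 0) = X :=
      (tsum_eq_sum (s := s) (by simp +contextual)).trans
        (Finset.sum_congr rfl (by simp +contextual))
    rwa [hsum, sq] at hs
  obtain hX0 | hX0 := eq_or_ne X 0
  · exact hX0 ▸ zero_le
  · exact (ENNReal.mul_le_mul_iff_left hX0 hX).1 hXX

end SquareSummable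

section Collisions

variable {α β τ : Type*} [DecidableEq τ]

/-- The bilinear form `∑ f(p) g(p')` over the pairs with `φ p = ψ p'`, which
Cauchy–Schwarz bounds by the energies of `f` and `g` separately. -/
noncomputable def collisionForm (φ : α → τ) (ψ : β → τ) (f : α → ℝ≥0∞) (g : β → ℝ≥0∞) : ℝ≥0∞ :=
  ∑' p, ∑' p', if φ p = ψ p' then f p * g p' else 0

/-- The `ℓ²` norm squared of the push-forward of `f` along `φ`, i.e. the energy of `f` with respect
to the fibers of `φ`. -/
noncomputable def fiberEnergy (φ : α → τ) (f : α → ℝ≥0∞) : ℝ≥0∞ :=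
  collisionForm φ φ f f

lemma collisionForm_eq_tsum (φ : α → τ) (ψ : β → τ) (f : α → ℝ≥0∞) (g : β → ℝ≥0∞) :
    collisionForm φ ψ f g =
      ∑' t, (∑' p, if φ p = t then f p else 0) * ∑' p, if ψ p = t then g p else 0 := by
  simp_rw [← ENNReal.tsum_mul_right, ← ENNReal.tsum_mul_left]
  rw [ENNReal.tsum_comm]
  refine tsum_congr fun p => ?_
  rw [ENNReal.tsum_comm]
  refine tsum_congr fun p' => ?_
  rw [tsum_eq_single (φ p) fun t ht => by simp [ht.symm]]
  simp [eq_comm]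

theorem collisionForm_sq_le (φ : α → τ) (ψ : β → τ) (f : α → ℝ≥0∞) (g : β → ℝ≥0∞) :
    collisionForm φ ψ f g ^ 2 ≤ fiberEnergy φ f * fiberEnergy ψ g := by
  simp_rw [fiberEnergy, collisionForm_eq_tsum, ← sq]
  exact tsum_mul_sq_le_tsum_sq_mul_tsum_sq _ _

lemma fiberEnergy_comp_of_injective {σ : Type*} [DecidableEq σ] {e : τ → σ}
    (he : Function.Injective e) (φ : α → τ) (f : α → ℝ≥0∞) :
    fiberEnergy (e ∘ φ) f = fiberEnergy φ f := by
  simp only [fiberEnergy, collisionForm, Function.comp_apply, he.eq_iff]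

lemma tsum_sq_le_mul_tsum_sq_of_card_le {f : α → ℝ≥0∞} {K : ℝ≥0∞}
    (hK : ∀ s : Finset α, (∀ p ∈ s, f p ≠ 0) → (s.card : ℝ≥0∞) ≤ K) :
    (∑' p, f p) ^ 2 ≤ K * ∑' p, f p ^ 2 := by
  classical
  have hcard : ∑' p, (if f p ≠ 0 then 1 else 0 : ℝ≥0∞) ^ 2 ≤ K := by
    rw [ENNReal.tsum_eq_iSup_sum]
    refine iSup_le fun s => ?_
    simp only [ite_pow, one_pow, ne_eq, OfNat.ofNat_ne_zero, not_false_eq_true, zero_pow,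
      Finset.sum_boole]
    exact hK _ fun p hp => (Finset.mem_filter.1 hp).2
  calc (∑' p, f p) ^ 2 = (∑' p, (if f p ≠ 0 then 1 else 0) * f p) ^ 2 := by
        congr 2 with p
        by_cases hp : f p = 0 <;> simp [hp]
    _ ≤ (∑' p, (if f p ≠ 0 then 1 else 0 : ℝ≥0∞) ^ 2) * ∑' p, f p ^ 2 :=
        tsum_mul_sq_le_tsum_sq_mul_tsum_sq _ _
    _ ≤ K * ∑' p, f p ^ 2 := by gcongr

theorem fiberEnergy_le_mul_tsum_sq_of_card_le {φ : α → τ} {f : α → ℝ≥0∞} {K : ℝ≥0∞}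
    (hK : ∀ t, ∀ s : Finset α, (∀ p ∈ s, φ p = t ∧ f p ≠ 0) → (s.card : ℝ≥0∞) ≤ K) :
    fiberEnergy φ f ≤ K * ∑' p, f p ^ 2 := by
  calc fiberEnergy φ f = ∑' t, (∑' p, if φ p = t then f p else 0) ^ 2 := by
        simp only [fiberEnergy, collisionForm_eq_tsum, ← sq]
    _ ≤ ∑' t, K * ∑' p, (if φ p = t then f p else 0) ^ 2 := by
        gcongr with t
        exact tsum_sq_le_mul_tsum_sq_of_card_le fun s hs => hK t s fun p hp => by
          simpa using hs p hp
    _ = K * ∑' p, ∑' t, (if φ p = t then f p else 0) ^ 2 := by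
        rw [ENNReal.tsum_mul_left, ENNReal.tsum_comm]
    _ = K * ∑' p, f p ^ 2 := by
        congr 2 with p
        rw [tsum_eq_single (φ p) fun t ht => by simp [ht.symm], if_pos rfl]

end Collisions

section PairEnergy

variable {V G : Type*} [AddCommGroup G] [DecidableEq G] (ι : V → G)

/-- The mixed additive energy `∑ a(x) b(y) a(x') b(y')` over `ι x + ι y = ι x' + ι y'`: the
quantity through which the size of a single support enters the trilinear estimate. -/
noncomputable def pairEnergy (a b : V → ℝ≥0∞) : ℝ≥0∞ :=
  fiberEnergy (fun p : V × V => ι p.1 + ι p.2) fun p => a p.1 * b p.2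

lemma pairEnergy_comm (a b : V → ℝ≥0∞) : pairEnergy ι a b = pairEnergy ι b a := by
  unfold pairEnergy fiberEnergy collisionForm
  rw [← (Equiv.prodComm V V).tsum_eq]
  refine tsum_congr fun p => ?_
  rw [← (Equiv.prodComm V V).tsum_eq]
  simp only [Equiv.prodComm_apply, Prod.fst_swap, Prod.snd_swap, add_comm, mul_comm]

-- Exchanging `y` and `y'` turns `ι x + ι y = ι x' + ι y'` into `ι x - ι y = ι x' - ι y'`.
lemma pairEnergy_eq_fiberEnergy_sub (a b : V → ℝ≥0∞) :
    pairEnergy ι a b = fiberEnergy (fun p : V × V => ι p.1 - ι p.2) fun p => a p.1 * b p.2 := by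
  have hswap (x y x' y' : V) :
      (if ι x + ι y = ι x' + ι y' then a x * b y * (a x' * b y') else 0) =
        if ι x - ι y' = ι x' - ι y then a x * b y' * (a x' * b y) else 0 := by
    simp only [sub_eq_sub_iff_add_eq_add]
    congr 1; ring
  unfold pairEnergy fiberEnergy collisionForm
  simp only [ENNReal.tsum_prod', hswap]
  exact tsum_congr fun x => ENNReal.tsum_comm.trans
    ((tsum_congr fun x' => ENNReal.tsum_comm).trans ENNReal.tsum_comm)

/-- The trilinear sum `∑ w₁(n₁) w₂(n₂) w₃(n₃)` over `ι n - ι n₁ + ι n₂ - ι n₃ = γ`. With `ι` the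
lift to the paraboloid this is one level set of the cubic Schrödinger resonance function. -/
noncomputable def resonantSum (γ : G) (w₁ w₂ w₃ : V → ℝ≥0∞) (n : V) : ℝ≥0∞ :=
  ∑' q : V × V × V,
    if ι n - ι q.1 + ι q.2.1 - ι q.2.2 = γ then w₁ q.1 * w₂ q.2.1 * w₃ q.2.2 else 0

theorem tsum_mul_resonantSum_sq_le_add (γ : G) (w₀ w₁ w₂ w₃ : V → ℝ≥0∞) :
    (∑' n, w₀ n * resonantSum ι γ w₁ w₂ w₃ n) ^ 2 ≤
      pairEnergy ι w₀ w₂ * pairEnergy ι w₁ w₃ := by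
  have hpair : ∑' n, w₀ n * resonantSum ι γ w₁ w₂ w₃ n =
      collisionForm (fun p : V × V => ι p.1 + ι p.2) ((γ + ·) ∘ fun p : V × V => ι p.1 + ι p.2)
        (fun p => w₀ p.1 * w₂ p.2) fun p => w₁ p.1 * w₃ p.2 := by
    simp only [collisionForm, resonantSum, ENNReal.tsum_prod', ← ENNReal.tsum_mul_left]
    refine tsum_congr fun n => ENNReal.tsum_comm.trans ?_
    refine tsum_congr fun n₂ => tsum_congr fun n₁ => tsum_congr fun n₃ => ?_
    have hiff : ι n - ι n₁ + ι n₂ - ι n₃ = γ ↔ ι n + ι n₂ = γ + (ι n₁ + ι n₃) := by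
      rw [← sub_eq_iff_eq_add]; congr! 1; abel
    simp only [hiff, Function.comp_apply, mul_ite, mul_zero]
    congr 1; ring
  rw [hpair]
  refine (collisionForm_sq_le _ _ _ _).trans_eq ?_
  rw [fiberEnergy_comp_of_injective (add_right_injective γ), pairEnergy, pairEnergy]

theorem tsum_mul_resonantSum_sq_le_sub (γ : G) (w₀ w₁ w₂ w₃ : V → ℝ≥0∞) :
    (∑' n, w₀ n * resonantSum ι γ w₁ w₂ w₃ n) ^ 2 ≤
      pairEnergy ι w₀ w₁ * pairEnergy ι w₃ w₂ := by
  have hpair : ∑' n, w₀ n * resonantSum ι γ w₁ w₂ w₃ n =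
      collisionForm (fun p : V × V => ι p.1 - ι p.2) ((γ + ·) ∘ fun p : V × V => ι p.1 - ι p.2)
        (fun p => w₀ p.1 * w₁ p.2) fun p => w₃ p.1 * w₂ p.2 := by
    simp only [collisionForm, resonantSum, ENNReal.tsum_prod', ← ENNReal.tsum_mul_left]
    refine tsum_congr fun n => tsum_congr fun n₁ => ENNReal.tsum_comm.trans ?_
    refine tsum_congr fun n₃ => tsum_congr fun n₂ => ?_
    have hiff : ι n - ι n₁ + ι n₂ - ι n₃ = γ ↔ ι n - ι n₁ = γ + (ι n₃ - ι n₂) := by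
      rw [← sub_eq_iff_eq_add]; congr! 1; abel
    simp only [hiff, Function.comp_apply, mul_ite, mul_zero]
    congr 1; ring
  rw [hpair]
  refine (collisionForm_sq_le _ _ _ _).trans_eq ?_
  rw [fiberEnergy_comp_of_injective (add_right_injective γ), pairEnergy_eq_fiberEnergy_sub,
    pairEnergy_eq_fiberEnergy_sub]

end PairEnergy

section Paraboloid

/-- The lift `x ↦ (x, |x|²)` to the integer paraboloid, which merges the two resonance conditions
`n₁ - n₂ + n₃ = n` and `Φ = μ` into a single linear equation. -/
def paraboloid (x : ℤ × ℤ) : (ℤ × ℤ) × ℤ := (x, sqNorm x)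

lemma paraboloid_sub_add_sub_eq_iff {n n₁ n₂ n₃ : ℤ × ℤ} {μ : ℤ} :
    paraboloid n - paraboloid n₁ + paraboloid n₂ - paraboloid n₃ = (0, μ) ↔
      n₁ - n₂ + n₃ = n ∧ PhiZ2 n n₁ n₂ n₃ = μ := by
  refine Prod.ext_iff.trans (and_congr ?_ Iff.rfl)
  change n - n₁ + n₂ - n₃ = 0 ↔ n₁ - n₂ + n₃ = n
  rw [sub_eq_zero, ← eq_sub_iff_add_eq, sub_eq_iff_eq_add, eq_comm (b := n)]
  congr! 1; abel

-- The differences `p.1 - p.2` lie on a common circle, and determine `p` as `p.1 + p.2` is fixed.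
theorem exists_card_le_of_paraboloid_add_eq {δ : ℝ} (hδ : 0 < δ) :
    ∃ C : ℝ, 0 < C ∧ ∀ (s : Finset ((ℤ × ℤ) × ℤ × ℤ)) (t : (ℤ × ℤ) × ℤ) (D : ℝ), 1 ≤ D →
      (∀ p ∈ s, paraboloid p.1 + paraboloid p.2 = t) →
      (∀ p ∈ s, ∀ q ∈ s, (sqNorm (p.1 - q.1) : ℝ) ≤ D) → (s.card : ℝ) ≤ C * D ^ δ := by
  obtain ⟨C, hC, hcard⟩ := exists_card_le_of_sqNorm_eq hδ
  refine ⟨C * 4 ^ δ, by positivity, fun s t D hD ht hs => ?_⟩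
  have hsub {p q : (ℤ × ℤ) × ℤ × ℤ} (hp : p ∈ s) (hq : q ∈ s) :
      (p.1 - p.2) - (q.1 - q.2) = (2 : ℤ) • (p.1 - q.1) := by
    have hsum : p.1 + p.2 = q.1 + q.2 := congrArg Prod.fst ((ht p hp).trans (ht q hq).symm)
    rw [← sub_eq_iff_eq_add'] at hsum
    rw [← hsum]; module
  have hinj : Set.InjOn (fun p : (ℤ × ℤ) × ℤ × ℤ => p.1 - p.2) s := by
    intro p hp q hq (hpq : p.1 - p.2 = q.1 - q.2)
    have hzero : (2 : ℤ) • (p.1 - q.1) = 0 := by rw [← hsub hp hq, hpq, sub_self]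
    have hfst : p.1 = q.1 := sub_eq_zero.1 ((smul_eq_zero.1 hzero).resolve_left two_ne_zero)
    exact Prod.ext hfst (by simpa [hfst] using hpq)
  calc (s.card : ℝ) = (s.image fun p => p.1 - p.2).card := by rw [Finset.card_image_of_injOn hinj]
    _ ≤ C * (4 * D) ^ δ := by
      refine hcard _ (2 * t.2 - sqNorm t.1) _ (by linarith) ?_ ?_
      · simp only [Finset.forall_mem_image]
        intro p hp
        rw [← ht p hp, sqNorm_sub_eq]
        rfl
      · simp only [Finset.forall_mem_image]
        intro p hp q hq
        have hscale : sqNorm ((2 : ℤ) • (p.1 - q.1)) = 4 * sqNorm (p.1 - q.1) := by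
          simp only [sqNorm, Prod.smul_fst, Prod.smul_snd, smul_eq_mul]; ring
        rw [hsub hp hq, hscale]
        push_cast
        linarith [hs p hp q hq]
    _ = C * 4 ^ δ * D ^ δ := by rw [Real.mul_rpow (by norm_num) (by linarith), mul_assoc]

/-- The support of `w` has size `N`: it lies in a disc of radius comparable to `N`, with any
centre. The radius is measured by `⟨·⟩` and normalised so that `N ≤ ⟨n⟩ < 2N` qualifies. -/
def SupportedInDisc (w : ℤ × ℤ → ℝ≥0∞) (N : ℝ) : Prop :=
  ∃ c : ℤ × ℤ, ∀ x, w x ≠ 0 → jbZ2 (x - c) ≤ 2 * N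

lemma SupportedInDisc.sqNorm_sub_le {w : ℤ × ℤ → ℝ≥0∞} {N : ℝ} (hw : SupportedInDisc w N)
    {x y : ℤ × ℤ} (hx : w x ≠ 0) (hy : w y ≠ 0) : (sqNorm (x - y) : ℝ) ≤ 16 * N ^ 2 := by
  obtain ⟨c, hc⟩ := hw
  have hball {z : ℤ × ℤ} (hz : w z ≠ 0) : (sqNorm (z - c) : ℝ) ≤ 4 * N ^ 2 := by
    have hsq := (Real.sqrt_le_iff.1 (hc z hz)).2
    simp only [sqNorm]
    push_cast
    linarith
  have hpar : (sqNorm (x - y) : ℝ) ≤ 2 * (sqNorm (x - c) + sqNorm (y - c)) := by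
    have := sqNorm_sub_eq (x - c) (y - c)
    have := sqNorm_nonneg (x - c + (y - c))
    rw [sub_sub_sub_cancel_right] at *
    exact_mod_cast (by linarith : sqNorm (x - y) ≤ 2 * (sqNorm (x - c) + sqNorm (y - c)))
  linarith [hball hx, hball hy]

theorem exists_pairEnergy_paraboloid_le {ε : ℝ} (hε : 0 < ε) :
    ∃ C : ℝ, 0 < C ∧ ∀ (N : ℝ) (a b : ℤ × ℤ → ℝ≥0∞), 1 ≤ N → SupportedInDisc a N →
      pairEnergy paraboloid a b ≤
        ENNReal.ofReal (C * N ^ ε) * ((∑' x, a x ^ 2) * ∑' x, b x ^ 2) := by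
  obtain ⟨C, hC, hcard⟩ := exists_card_le_of_paraboloid_add_eq (half_pos hε)
  refine ⟨C * 16 ^ (ε / 2), by positivity, fun N a b hN ha => ?_⟩
  have hprod : ∑' p : (ℤ × ℤ) × ℤ × ℤ, (a p.1 * b p.2) ^ 2 =
      (∑' x, a x ^ 2) * ∑' x, b x ^ 2 := by
    simp_rw [ENNReal.tsum_prod', mul_pow, ENNReal.tsum_mul_left, ENNReal.tsum_mul_right]
  rw [← hprod]
  refine fiberEnergy_le_mul_tsum_sq_of_card_le fun t s hs => ?_
  rw [← ENNReal.ofReal_natCast]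
  refine ENNReal.ofReal_le_ofReal ?_
  calc (s.card : ℝ) ≤ C * (16 * N ^ 2) ^ (ε / 2) :=
        hcard s t _ (by nlinarith) (fun p hp => (hs p hp).1) fun p hp q hq =>
          ha.sqNorm_sub_le (left_ne_zero_of_mul (hs p hp).2) (left_ne_zero_of_mul (hs q hq).2)
    _ = C * 16 ^ (ε / 2) * N ^ ε := by
      rw [Real.mul_rpow (by norm_num) (by positivity), ← Real.rpow_natCast,
        ← Real.rpow_mul (by linarith), mul_assoc]
      congr 3; push_cast; ring

lemma exists_pairEnergy_mul_pairEnergy_le {ε : ℝ} (hε : 0 < ε) :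
    ∃ C : ℝ, 0 < C ∧ ∀ (N M : ℝ) (a b c d : ℤ × ℤ → ℝ≥0∞), 1 ≤ N → 1 ≤ M →
      SupportedInDisc a N → SupportedInDisc c M →
      pairEnergy paraboloid a b * pairEnergy paraboloid c d ≤
        ENNReal.ofReal (C * (N * M) ^ ε) ^ 2 *
          ((∑' x, a x ^ 2) * (∑' x, b x ^ 2) * (∑' x, c x ^ 2) * ∑' x, d x ^ 2) := by
  obtain ⟨C, hC, henergy⟩ := exists_pairEnergy_paraboloid_le (ε := 2 * ε) (by positivity)
  refine ⟨C, hC, fun N M a b c d hN hM ha hc =>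
    (mul_le_mul' (henergy N a b hN ha) (henergy M c d hM hc)).trans_eq ?_⟩
  have hconst : ENNReal.ofReal (C * N ^ (2 * ε)) * ENNReal.ofReal (C * M ^ (2 * ε)) =
      ENNReal.ofReal (C * (N * M) ^ ε) ^ 2 := by
    rw [← ENNReal.ofReal_mul (by positivity), ← ENNReal.ofReal_pow (by positivity)]
    congr 1
    rw [Real.mul_rpow (by positivity) (by positivity), mul_comm 2 ε,
      Real.rpow_mul (by positivity), Real.rpow_mul (by positivity), Real.rpow_two, Real.rpow_two]
    ring
  rw [← hconst]
  ring

-- Any two of the three supports may be used: pair the output frequency with one of the two, so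
-- that Cauchy–Schwarz puts the other into the second energy.
theorem exists_tsum_mul_resonantSum_paraboloid_sq_le {ε : ℝ} (hε : 0 < ε) :
    ∃ C : ℝ, 0 < C ∧ ∀ (N M : ℝ) (γ : (ℤ × ℤ) × ℤ) (w₀ w₁ w₂ w₃ : ℤ × ℤ → ℝ≥0∞),
      1 ≤ N → 1 ≤ M → (SupportedInDisc w₁ N ∧ SupportedInDisc w₂ M ∨
        SupportedInDisc w₂ N ∧ SupportedInDisc w₃ M ∨
        SupportedInDisc w₁ N ∧ SupportedInDisc w₃ M) →
      (∑' n, w₀ n * resonantSum paraboloid γ w₁ w₂ w₃ n) ^ 2 ≤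
        ENNReal.ofReal (C * (N * M) ^ ε) ^ 2 *
          ((∑' x, w₁ x ^ 2) * (∑' x, w₂ x ^ 2) * ∑' x, w₃ x ^ 2) * ∑' x, w₀ x ^ 2 := by
  obtain ⟨C, hC, henergy⟩ := exists_pairEnergy_mul_pairEnergy_le hε
  refine ⟨C, hC, fun N M γ w₀ w₁ w₂ w₃ hN hM hw => ?_⟩
  obtain ⟨h₁, h₂⟩ | ⟨h₂, h₃⟩ | ⟨h₁, h₃⟩ := hw
  · refine (tsum_mul_resonantSum_sq_le_add paraboloid γ w₀ w₁ w₂ w₃).trans ?_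
    rw [pairEnergy_comm _ w₀, mul_comm]
    exact (henergy N M w₁ w₃ w₂ w₀ hN hM h₁ h₂).trans_eq (by ring)
  · refine (tsum_mul_resonantSum_sq_le_add paraboloid γ w₀ w₁ w₂ w₃).trans ?_
    rw [pairEnergy_comm _ w₀, pairEnergy_comm _ w₁]
    exact (henergy N M w₂ w₀ w₃ w₁ hN hM h₂ h₃).trans_eq (by ring)
  · refine (tsum_mul_resonantSum_sq_le_sub paraboloid γ w₀ w₁ w₂ w₃).trans ?_
    rw [pairEnergy_comm _ w₀]
    exact (henergy N M w₁ w₀ w₃ w₂ hN hM h₁ h₃).trans_eq (by ring)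

end Paraboloid

section Resonance

lemma resonantSum_paraboloid_indicator (S₁ S₂ S₃ : Set (ℤ × ℤ)) (μ : ℤ)
    (ω₁ ω₂ ω₃ : ℤ × ℤ → ℝ≥0∞) (n : ℤ × ℤ) :
    resonantSum paraboloid (0, μ) (S₁.indicator ω₁) (S₂.indicator ω₂) (S₃.indicator ω₃) n =
      ∑' p : {q : (ℤ × ℤ) × (ℤ × ℤ) × (ℤ × ℤ) //
          q.1 - q.2.1 + q.2.2 = n ∧ PhiZ2 n q.1 q.2.1 q.2.2 = μ ∧
          q.1 ∈ S₁ ∧ q.2.1 ∈ S₂ ∧ q.2.2 ∈ S₃},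
        ω₁ p.1.1 * ω₂ p.1.2.1 * ω₃ p.1.2.2 := by
  classical
  refine Eq.trans (tsum_congr fun q => ?_) (tsum_subtype {q : (ℤ × ℤ) × (ℤ × ℤ) × (ℤ × ℤ) |
    q.1 - q.2.1 + q.2.2 = n ∧ PhiZ2 n q.1 q.2.1 q.2.2 = μ ∧ q.1 ∈ S₁ ∧ q.2.1 ∈ S₂ ∧ q.2.2 ∈ S₃}
    fun q => ω₁ q.1 * ω₂ q.2.1 * ω₃ q.2.2).symm
  simp only [paraboloid_sub_add_sub_eq_iff, Set.indicator_apply, ite_and, ite_mul, mul_ite,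
    zero_mul, mul_zero, Set.mem_ofPred_eq]
  split_ifs <;> rfl

lemma tsum_indicator_sq {α : Type*} (S : Set α) (ω : α → ℝ≥0∞) :
    ∑' x, S.indicator ω x ^ 2 = ∑' x : S, ω x ^ 2 := by
  rw [tsum_subtype S fun x => ω x ^ 2]
  refine tsum_congr fun x => ?_
  by_cases hx : x ∈ S <;> simp [hx]

lemma supportedInDisc_indicator {S : Set (ℤ × ℤ)} {c : ℤ × ℤ} {N : ℝ}
    (hS : ∀ x ∈ S, jbZ2 (x - c) ≤ 2 * N) (ω : ℤ × ℤ → ℝ≥0∞) :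
    SupportedInDisc (S.indicator ω) N :=
  ⟨c, fun x hx => hS x (Set.mem_of_indicator_ne_zero hx)⟩

lemma med_mul_min_eq (a b c : ℝ) :
    max (min a b) (min (max a b) c) * min a (min b c) = a * b ∨
      max (min a b) (min (max a b) c) * min a (min b c) = b * c ∨
      max (min a b) (min (max a b) c) * min a (min b c) = a * c := by
  grind

theorem trilinear_dyadic_resonance_estimate_general {ε : ℝ} (hε : 0 < ε) :
    ∃ C : ℝ, 0 < C ∧ ∀ (N₁ N₂ N₃ : ℝ) (c₁ c₂ c₃ : ℤ × ℤ) (S₁ S₂ S₃ : Set (ℤ × ℤ)),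
      1 ≤ N₁ → 1 ≤ N₂ → 1 ≤ N₃ → (∀ x ∈ S₁, jbZ2 (x - c₁) ≤ 2 * N₁) →
      (∀ x ∈ S₂, jbZ2 (x - c₂) ≤ 2 * N₂) → (∀ x ∈ S₃, jbZ2 (x - c₃) ≤ 2 * N₃) →
      ∀ (μ : ℤ) (ω₁ ω₂ ω₃ : ℤ × ℤ → ℝ≥0∞),
        (∑' n : ℤ × ℤ, (∑' p : {q : (ℤ × ℤ) × (ℤ × ℤ) × (ℤ × ℤ) //
                q.1 - q.2.1 + q.2.2 = n ∧ PhiZ2 n q.1 q.2.1 q.2.2 = μ ∧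
                q.1 ∈ S₁ ∧ q.2.1 ∈ S₂ ∧ q.2.2 ∈ S₃},
              ω₁ p.1.1 * ω₂ p.1.2.1 * ω₃ p.1.2.2) ^ 2) ^ (1 / 2 : ℝ) ≤
          ENNReal.ofReal (C * (max (min N₁ N₂) (min (max N₁ N₂) N₃) * min N₁ (min N₂ N₃)) ^ ε) *
            (∑' m : S₁, ω₁ m ^ 2) ^ (1 / 2 : ℝ) * (∑' m : S₂, ω₂ m ^ 2) ^ (1 / 2 : ℝ) *
            (∑' m : S₃, ω₃ m ^ 2) ^ (1 / 2 : ℝ) := by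
  obtain ⟨C, hC, hdual⟩ := exists_tsum_mul_resonantSum_paraboloid_sq_le hε
  refine ⟨C, hC, fun N₁ N₂ N₃ c₁ c₂ c₃ S₁ S₂ S₃ hN₁ hN₂ hN₃ hS₁ hS₂ hS₃ μ ω₁ ω₂ ω₃ => ?_⟩
  simp only [← tsum_indicator_sq, ← resonantSum_paraboloid_indicator]
  have h₁ := supportedInDisc_indicator hS₁ ω₁
  have h₂ := supportedInDisc_indicator hS₂ ω₂
  have h₃ := supportedInDisc_indicator hS₃ ω₃
  have hsq : ∑' n, resonantSum paraboloid (0, μ) (S₁.indicator ω₁) (S₂.indicator ω₂)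
      (S₃.indicator ω₃) n ^ 2 ≤ ENNReal.ofReal
        (C * (max (min N₁ N₂) (min (max N₁ N₂) N₃) * min N₁ (min N₂ N₃)) ^ ε) ^ 2 *
      ((∑' x, S₁.indicator ω₁ x ^ 2) * (∑' x, S₂.indicator ω₂ x ^ 2) *
        ∑' x, S₃.indicator ω₃ x ^ 2) := by
    refine tsum_sq_le_of_forall_tsum_mul_sq_le fun w => ?_
    obtain h | h | h := med_mul_min_eq N₁ N₂ N₃ <;> rw [h]
    · exact hdual N₁ N₂ _ w _ _ _ hN₁ hN₂ (.inl ⟨h₁, h₂⟩)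
    · exact hdual N₂ N₃ _ w _ _ _ hN₂ hN₃ (.inr (.inl ⟨h₂, h₃⟩))
    · exact hdual N₁ N₃ _ w _ _ _ hN₁ hN₃ (.inr (.inr ⟨h₁, h₃⟩))
  refine (ENNReal.rpow_le_rpow hsq (by norm_num)).trans_eq ?_
  simp only [ENNReal.mul_rpow_of_nonneg _ _ (by norm_num : (0 : ℝ) ≤ 1 / 2)]
  rw [← ENNReal.rpow_two, ← ENNReal.rpow_mul, mul_one_div_cancel two_ne_zero, ENNReal.rpow_one]
  ring

end Resonance

/-- Dyadically localized trilinear estimate on the resonance level set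
`Φ = μ` for the cubic NLS on `𝕋²`, with constant `C (N_med N_min)^ε`.
Powers of two `N = 2^k`, `N_j = 2^{k_j}`. -/
theorem trilinear_dyadic_resonance_estimate (ε : ℝ) (hε : 0 < ε) :
    ∃ C : ℝ, 0 < C ∧
      ∀ (k k₁ k₂ k₃ : ℕ) (μ : ℤ) (ω₁ ω₂ ω₃ : ℤ × ℤ → ℝ≥0),
        (∑' n : {m : ℤ × ℤ // dyadicZ2 ((2 : ℝ) ^ k) m},
            (∑' p : {q : (ℤ × ℤ) × (ℤ × ℤ) × (ℤ × ℤ) //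
                q.1 - q.2.1 + q.2.2 = n.1 ∧ PhiZ2 n.1 q.1 q.2.1 q.2.2 = μ ∧
                dyadicZ2 ((2 : ℝ) ^ k₁) q.1 ∧ dyadicZ2 ((2 : ℝ) ^ k₂) q.2.1 ∧
                dyadicZ2 ((2 : ℝ) ^ k₃) q.2.2},
              ((ω₁ p.1.1 : ℝ≥0∞) * (ω₂ p.1.2.1 : ℝ≥0∞) * (ω₃ p.1.2.2 : ℝ≥0∞))) ^ 2) ^ (1/2 : ℝ)
        ≤ ENNReal.ofReal
            (C * ((2 : ℝ) ^ (max (min k₁ k₂) (min (max k₁ k₂) k₃)) *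
                  (2 : ℝ) ^ (min k₁ (min k₂ k₃))) ^ ε) *
          (∑' m : {m : ℤ × ℤ // dyadicZ2 ((2 : ℝ) ^ k₁) m}, ((ω₁ m.1 : ℝ≥0∞)) ^ 2) ^ (1/2 : ℝ) *
          (∑' m : {m : ℤ × ℤ // dyadicZ2 ((2 : ℝ) ^ k₂) m}, ((ω₂ m.1 : ℝ≥0∞)) ^ 2) ^ (1/2 : ℝ) *
          (∑' m : {m : ℤ × ℤ // dyadicZ2 ((2 : ℝ) ^ k₃) m}, ((ω₃ m.1 : ℝ≥0∞)) ^ 2) ^ (1/2 : ℝ) := by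
  obtain ⟨C, hC, hbound⟩ := trilinear_dyadic_resonance_estimate_general hε
  refine ⟨C, hC, fun k k₁ k₂ k₃ μ ω₁ ω₂ ω₃ => ?_⟩
  have hmono : Monotone fun k : ℕ => (2 : ℝ) ^ k := pow_right_mono₀ one_le_two
  have hone (k : ℕ) : (1 : ℝ) ≤ 2 ^ k := one_le_pow₀ one_le_two
  have hdisc (k : ℕ) (x : ℤ × ℤ) (hx : dyadicZ2 (2 ^ k) x) : jbZ2 (x - 0) ≤ 2 * 2 ^ k := by
    simpa using hx.2.le
  have hglobal := hbound (2 ^ k₁) (2 ^ k₂) (2 ^ k₃) 0 0 0 {m | dyadicZ2 (2 ^ k₁) m}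
    {m | dyadicZ2 (2 ^ k₂) m} {m | dyadicZ2 (2 ^ k₃) m} (hone k₁) (hone k₂) (hone k₃)
    (hdisc k₁) (hdisc k₂) (hdisc k₃) μ (fun x => ω₁ x) (fun x => ω₂ x) fun x => ω₃ x
  simp only [← hmono.map_min, ← hmono.map_max] at hglobal
  refine le_trans ?_ hglobal
  gcongr
  exact ENNReal.tsum_comp_le_tsum_of_injective Subtype.val_injective _
end

section
/- Let 1/2 < α < 1. There exists C > 0, depending only on α, such that for every real K ≥ 1, every real μ*, and every k* ∈ ℤ, the number of pairs (k, l) ∈ ℤ × ℤ satisfying k + l = k*, | |k|^{2α} + |l|^{2α} − μ* | ≤ 1, |k| ≤ |l|, and |k| ≤ K is at most C·K^{1−α}. -/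
/-!
For `p = 2α`, the function `x ↦ |x|^p + |k* - x|^p` is strongly convex on `[-K, K]` with parameter
`m = p (p - 1) K^(p - 2)`, the minimum over that interval of the second derivative of `|x|^p`. If it
takes values in an interval of length `δ` at three points `x ≤ y ≤ z`, strong convexity gives
`m / 2 * (y - x) * (z - y) ≤ δ`, so `y` lies within `√(2 δ / m)` of `x` or of `z`. Taking for `x`
and `z` the extreme integer solutions, all solutions lie in two intervals of that length, and
`m ^ (-1 / 2)` is of order `K ^ (1 - p / 2) = K ^ (1 - α)`.
-/

open Set Metric
open scoped Finset

section Counting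

theorem finite_and_ncard_le_of_forall_finset_card_le {ι : Type*} {s : Set ι} {c : ℝ}
    (h : ∀ t : Finset ι, (t : Set ι) ⊆ s → (#t : ℝ) ≤ c) : s.Finite ∧ (s.ncard : ℝ) ≤ c := by
  have hfin : s.Finite := by
    by_contra hinf
    obtain ⟨t, hts, htcard⟩ := Set.Infinite.exists_subset_card_eq hinf (⌊c⌋₊ + 1)
    have hle := h t hts
    rw [htcard, Nat.cast_succ] at hle
    exact (Nat.lt_floor_add_one c).not_ge hle
  refine ⟨hfin, ?_⟩
  rw [ncard_eq_toFinset_card s hfin]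
  exact h hfin.toFinset hfin.coe_toFinset.subset

theorem le_sqrt_or_le_sqrt_of_mul_le {u v d : ℝ} (huv : u * v ≤ d) : u ≤ √d ∨ v ≤ √d := by
  by_contra! ⟨hu, hv⟩
  have hlt : √d * √d < u * v := mul_lt_mul'' hu hv (Real.sqrt_nonneg d) (Real.sqrt_nonneg d)
  exact (Real.lt_sqrt_of_sq_lt (by rw [sq]; exact hlt.trans_le huv)).false

theorem card_finset_int_le_of_forall_sub_mul_sub_le {t : Finset ℤ} {d : ℝ}
    (h : ∀ x ∈ t, ∀ y ∈ t, ∀ z ∈ t, x ≤ y → y ≤ z → ((y : ℝ) - x) * (z - y) ≤ d) :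
    (#t : ℝ) ≤ 2 * √d + 2 := by
  obtain rfl | ht := t.eq_empty_or_nonempty
  · simp only [Finset.card_empty, Nat.cast_zero]
    positivity
  let a := t.min' ht
  let b := t.max' ht
  let n := ⌊√d⌋₊
  have hcover : t ⊆ Finset.Icc a (a + n) ∪ Finset.Icc (b - n) b := by
    intro y hy
    have hay : a ≤ y := t.min'_le y hy
    have hyb : y ≤ b := t.le_max' y hy
    have le_floor {w : ℤ} (hw₀ : 0 ≤ w) (hw : (w : ℝ) ≤ √d) : w ≤ n := by
      lift w to ℕ using hw₀
      exact_mod_cast Nat.le_floor (by exact_mod_cast hw)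
    rw [Finset.mem_union, Finset.mem_Icc, Finset.mem_Icc]
    refine (le_sqrt_or_le_sqrt_of_mul_le
      (h a (t.min'_mem ht) y hy b (t.max'_mem ht) hay hyb)).imp (fun hnear ↦ ?_) fun hnear ↦ ?_
    · have hya := le_floor (sub_nonneg.2 hay) (by exact_mod_cast hnear)
      omega
    · have hby := le_floor (sub_nonneg.2 hyb) (by exact_mod_cast hnear)
      omega
  have hcard : #t ≤ 2 * n + 2 := by
    calc #t ≤ #(Finset.Icc a (a + n)) + #(Finset.Icc (b - n) b) :=
          (Finset.card_le_card hcover).trans (Finset.card_union_le _ _)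
      _ = 2 * n + 2 := by rw [Int.card_Icc, Int.card_Icc]; omega
  calc (#t : ℝ) ≤ 2 * n + 2 := by exact_mod_cast hcard
    _ ≤ 2 * √d + 2 := by gcongr; exact Nat.floor_le (Real.sqrt_nonneg d)

end Counting

section StrongConvexity

theorem half_mul_sub_mul_sub_le_max_sub_of_strongConvexOn {s : Set ℝ} {f : ℝ → ℝ} {m x y z : ℝ}
    (hf : StrongConvexOn s m f) (hx : x ∈ s) (hz : z ∈ s) (hxy : x ≤ y) (hyz : y ≤ z) :
    m / 2 * ((y - x) * (z - y)) ≤ max (f x) (f z) - f y := by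
  have hy : y ∈ segment ℝ x z := by
    rw [segment_eq_Icc (hxy.trans hyz)]
    exact ⟨hxy, hyz⟩
  obtain ⟨a, b, ha, hb, hab, hy⟩ := hy
  have hgap : (y - x) * (z - y) = a * b * (x - z) ^ 2 := by
    obtain rfl := eq_sub_of_add_eq hab
    rw [← hy, smul_eq_mul, smul_eq_mul]
    ring
  have hconv : f y ≤ a * f x + b * f z - a * b * (m / 2 * (x - z) ^ 2) := by
    have hcombo := hf.2 hx hz ha hb hab
    rw [hy] at hcombo
    simpa only [smul_eq_mul, Real.norm_eq_abs, sq_abs] using hcombo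
  have hmax : a * f x + b * f z ≤ max (f x) (f z) :=
    Convex.combo_le_max (f x) (f z) ha hb hab
  rw [hgap]
  linarith

theorem finite_and_ncard_int_le_of_strongConvexOn {s : Set ℝ} {f : ℝ → ℝ} {m A B : ℝ}
    (hm : 0 < m) (hf : StrongConvexOn s m f) :
    {k : ℤ | (k : ℝ) ∈ s ∧ f k ∈ Icc A B}.Finite ∧
      ({k : ℤ | (k : ℝ) ∈ s ∧ f k ∈ Icc A B}.ncard : ℝ) ≤ 2 * √(2 * (B - A) / m) + 2 := by
  refine finite_and_ncard_le_of_forall_finset_card_le fun t ht ↦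
    card_finset_int_le_of_forall_sub_mul_sub_le fun x hx y hy z hz hxy hyz ↦ ?_
  obtain ⟨hxs, -, hxB⟩ := ht hx
  obtain ⟨-, hyA, -⟩ := ht hy
  obtain ⟨hzs, -, hzB⟩ := ht hz
  have hgap := half_mul_sub_mul_sub_le_max_sub_of_strongConvexOn hf hxs hzs
    (Int.cast_le.2 hxy) (Int.cast_le.2 hyz)
  have hmax : max (f x) (f z) ≤ B := max_le hxB hzB
  rw [le_div_iff₀ hm]
  linarith

theorem strongConvexOn_add_convexOn {E : Type*} [NormedAddCommGroup E] [NormedSpace ℝ E]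
    {s : Set E} {m : ℝ} {f g : E → ℝ} (hf : StrongConvexOn s m f) (hg : ConvexOn ℝ s g) :
    StrongConvexOn s m (f + g) := by
  simpa only [StrongConvexOn, add_zero] using! hf.add hg.uniformConvexOn_zero

theorem convexOn_comp_of_mapsTo {𝕜 E β γ : Type*} [Semiring 𝕜] [PartialOrder 𝕜]
    [AddCommMonoid E] [SMul 𝕜 E] [AddCommMonoid β] [PartialOrder β] [SMul 𝕜 β]
    [AddCommMonoid γ] [PartialOrder γ] [SMul 𝕜 γ] {s : Set E} {t : Set β} {f : E → β} {g : β → γ}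
    (hg : ConvexOn 𝕜 t g) (hg' : MonotoneOn g t) (hf : ConvexOn 𝕜 s f) (hst : MapsTo f s t) :
    ConvexOn 𝕜 s (g ∘ f) :=
  ⟨hf.1, fun _ hx _ hy _ _ ha hb hab ↦
    (hg' (hst (hf.1 hx hy ha hb hab)) (hg.1 (hst hx) (hst hy) ha hb hab)
      (hf.2 hx hy ha hb hab)).trans (hg.2 (hst hx) (hst hy) ha hb hab)⟩

end StrongConvexity

section PowersOfNorm

variable {p K : ℝ}

theorem hasDerivAt_rpow_sub_half_mul_sq {x : ℝ} (hx : x ≠ 0) (m : ℝ) :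
    HasDerivAt (fun x ↦ x ^ p - m / 2 * x ^ 2) (p * x ^ (p - 1) - m * x) x := by
  refine ((Real.hasDerivAt_rpow_const (Or.inl hx)).sub
    ((hasDerivAt_pow 2 x).const_mul (m / 2))).congr_deriv ?_
  ring

theorem continuous_rpow_sub_half_mul_sq (hp : 0 ≤ p) (m : ℝ) :
    Continuous fun x : ℝ ↦ x ^ p - m / 2 * x ^ 2 :=
  (Real.continuous_rpow_const hp).sub (by fun_prop)

theorem convexOn_rpow_sub_half_mul_sq (hp : 1 ≤ p) (hp' : p ≤ 2) :
    ConvexOn ℝ (Icc 0 K) fun x ↦ x ^ p - p * (p - 1) * K ^ (p - 2) / 2 * x ^ 2 := by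
  set m := p * (p - 1) * K ^ (p - 2)
  refine convexOn_of_hasDerivWithinAt2_nonneg (convex_Icc 0 K)
    (continuous_rpow_sub_half_mul_sq (by linarith) m).continuousOn
    (f' := fun x ↦ p * x ^ (p - 1) - m * x) (f'' := fun x ↦ p * (p - 1) * x ^ (p - 2) - m)
    ?_ ?_ ?_ <;> rw [interior_Icc] <;> rintro x ⟨hx₀, hxK⟩
  · exact (hasDerivAt_rpow_sub_half_mul_sq hx₀.ne' m).hasDerivWithinAt
  · refine HasDerivAt.hasDerivWithinAt ((((Real.hasDerivAt_rpow_const (Or.inl hx₀.ne')).const_mul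
      p).sub ((hasDerivAt_id x).const_mul m)).congr_deriv ?_)
    rw [show p - 1 - 1 = p - 2 by ring]
    ring
  · have hpow : K ^ (p - 2) ≤ x ^ (p - 2) :=
      Real.rpow_le_rpow_of_nonpos hx₀ hxK.le (by linarith)
    have hcoeff : 0 ≤ p * (p - 1) := mul_nonneg (by linarith) (by linarith)
    exact sub_nonneg.2 (mul_le_mul_of_nonneg_left hpow hcoeff)

theorem monotoneOn_rpow_sub_half_mul_sq (hp : 0 ≤ p) (hp' : p ≤ 2) :
    MonotoneOn (fun x ↦ x ^ p - p * (p - 1) * K ^ (p - 2) / 2 * x ^ 2) (Icc 0 K) := by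
  set m := p * (p - 1) * K ^ (p - 2) with hm
  refine monotoneOn_of_hasDerivWithinAt_nonneg (convex_Icc 0 K)
    (continuous_rpow_sub_half_mul_sq hp m).continuousOn
    (f' := fun x ↦ p * x ^ (p - 1) - m * x) ?_ ?_ <;>
    rw [interior_Icc] <;> rintro x ⟨hx₀, hxK⟩
  · exact (hasDerivAt_rpow_sub_half_mul_sq hx₀.ne' m).hasDerivWithinAt
  · have hpow : K ^ (p - 2) ≤ x ^ (p - 2) :=
      Real.rpow_le_rpow_of_nonpos hx₀ hxK.le (by linarith)
    have hKpow : 0 ≤ K ^ (p - 2) := Real.rpow_nonneg (hx₀.trans hxK).le _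
    calc 0 ≤ p * x * (x ^ (p - 2) - (p - 1) * K ^ (p - 2)) := by
          refine mul_nonneg (by positivity) (sub_nonneg.2 ?_)
          exact (mul_le_of_le_one_left hKpow (by linarith)).trans hpow
      _ = p * (x ^ (p - 2) * x) - m * x := by rw [hm]; ring
      _ = p * x ^ (p - 1) - m * x := by
          rw [← Real.rpow_add_one hx₀.ne', show p - 2 + 1 = p - 1 by ring]

theorem strongConvexOn_norm_rpow {E : Type*} [NormedAddCommGroup E] [InnerProductSpace ℝ E]
    (hp : 1 ≤ p) (hp' : p ≤ 2) :
    StrongConvexOn (closedBall (0 : E) K) (p * (p - 1) * K ^ (p - 2)) fun x ↦ ‖x‖ ^ p := by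
  rw [strongConvexOn_iff_convex]
  exact convexOn_comp_of_mapsTo (convexOn_rpow_sub_half_mul_sq hp hp')
    (monotoneOn_rpow_sub_half_mul_sq (by linarith) hp') (convexOn_norm (convex_closedBall 0 K))
    fun x hx ↦ ⟨norm_nonneg x, mem_closedBall_zero_iff.1 hx⟩

theorem convexOn_dist_rpow {E : Type*} [SeminormedAddCommGroup E] [NormedSpace ℝ E] {s : Set E}
    (hs : Convex ℝ s) (c : E) (hp : 1 ≤ p) : ConvexOn ℝ s fun x ↦ dist x c ^ p :=
  convexOn_comp_of_mapsTo (convexOn_rpow hp)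
    (Real.monotoneOn_rpow_Ici_of_exponent_nonneg (by linarith)) (convexOn_dist c hs)
    fun _ _ ↦ dist_nonneg

theorem finite_and_ncard_int_abs_rpow_add_abs_sub_rpow_le (hp : 1 < p) (hp' : p ≤ 2) (hK : 0 < K)
    (c μ δ : ℝ) :
    {k : ℤ | |(k : ℝ)| ≤ K ∧ |(|(k : ℝ)| ^ p + |k - c| ^ p - μ)| ≤ δ}.Finite ∧
      ({k : ℤ | |(k : ℝ)| ≤ K ∧ |(|(k : ℝ)| ^ p + |k - c| ^ p - μ)| ≤ δ}.ncard : ℝ) ≤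
        2 * (√(4 * δ / (p * (p - 1))) * K ^ (1 - p / 2)) + 2 := by
  have hm : 0 < p * (p - 1) * K ^ (p - 2) :=
    mul_pos (mul_pos (by linarith) (by linarith)) (Real.rpow_pos_of_pos hK _)
  have hconvex : StrongConvexOn (closedBall (0 : ℝ) K) (p * (p - 1) * K ^ (p - 2))
      fun x ↦ |x| ^ p + |x - c| ^ p :=
    strongConvexOn_add_convexOn (strongConvexOn_norm_rpow hp.le hp')
      (convexOn_dist_rpow (convex_closedBall 0 K) c hp.le)
  have hwidth : √(2 * (μ + δ - (μ - δ)) / (p * (p - 1) * K ^ (p - 2))) =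
      √(4 * δ / (p * (p - 1))) * K ^ (1 - p / 2) := by
    have hpow : (K ^ (p - 2))⁻¹ = (K ^ (1 - p / 2)) ^ 2 := by
      rw [← Real.rpow_neg hK.le, ← Real.rpow_mul_natCast hK.le]
      congr 1
      push_cast
      ring
    rw [← div_div, div_eq_mul_inv _ (K ^ (p - 2)), hpow, Real.sqrt_mul' _ (sq_nonneg _),
      Real.sqrt_sq (by positivity)]
    congr 3
    ring
  have hcount := finite_and_ncard_int_le_of_strongConvexOn (A := μ - δ) (B := μ + δ)
    hm hconvex
  simpa only [hwidth, mem_closedBall_zero_iff, Real.norm_eq_abs, ← mem_Icc_iff_abs_le,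
    abs_sub_comm μ] using hcount

end PowersOfNorm

theorem count_sum_of_fractional_powers_general (α : ℝ) (hα : 1 / 2 < α) (hα' : α ≤ 1) :
    ∃ C : ℝ, 0 < C ∧
      ∀ K : ℝ, 1 ≤ K → ∀ (μs : ℝ) (ks : ℤ),
        {p : ℤ × ℤ | p.1 + p.2 = ks ∧
            |(|(p.1 : ℝ)| ^ (2 * α) + |(p.2 : ℝ)| ^ (2 * α) - μs)| ≤ 1 ∧
            |(p.1 : ℝ)| ≤ K}.Finite ∧
        ({p : ℤ × ℤ | p.1 + p.2 = ks ∧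
            |(|(p.1 : ℝ)| ^ (2 * α) + |(p.2 : ℝ)| ^ (2 * α) - μs)| ≤ 1 ∧
            |(p.1 : ℝ)| ≤ K}.ncard : ℝ) ≤ C * K ^ (1 - α) := by
  set R := √(4 / (2 * α * (2 * α - 1)))
  refine ⟨2 * R + 2, by positivity, fun K hK μs ks ↦ ?_⟩
  obtain ⟨hfin, hcard⟩ := finite_and_ncard_int_abs_rpow_add_abs_sub_rpow_le (p := 2 * α)
    (by linarith) (by linarith) (zero_lt_one.trans_le hK) ks μs 1
  rw [mul_one, mul_div_cancel_left₀ α two_ne_zero] at hcard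
  set T := {k : ℤ | |(k : ℝ)| ≤ K ∧ |(|(k : ℝ)| ^ (2 * α) + |(k : ℝ) - ks| ^ (2 * α) - μs)| ≤ 1}
  set S := {p : ℤ × ℤ | p.1 + p.2 = ks ∧
    |(|(p.1 : ℝ)| ^ (2 * α) + |(p.2 : ℝ)| ^ (2 * α) - μs)| ≤ 1 ∧ |(p.1 : ℝ)| ≤ K}
  have hmaps : MapsTo Prod.fst S T := by
    rintro ⟨k, l⟩ ⟨rfl, hμ, hkK⟩
    refine ⟨hkK, ?_⟩
    rwa [Int.cast_add, sub_add_cancel_left, abs_neg]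
  have hinj : InjOn Prod.fst S := fun x hx y hy hxy ↦
    Prod.ext hxy (by have := hx.1; have := hy.1; omega)
  have hone : 1 ≤ K ^ (1 - α) := Real.one_le_rpow hK (by linarith)
  refine ⟨hfin.of_injOn hmaps hinj, ?_⟩
  calc (S.ncard : ℝ) ≤ T.ncard := by exact_mod_cast ncard_le_ncard_of_injOn _ hmaps hinj hfin
    _ ≤ 2 * (R * K ^ (1 - α)) + 2 := hcard
    _ ≤ (2 * R + 2) * K ^ (1 - α) := by linarith

/-- For `1/2 < α < 1` there is `C > 0` (depending only on `α`) such that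
for every `K ≥ 1`, every real `μ*`, and every `k* ∈ ℤ`, the number of pairs `(k,l) ∈ ℤ²` with
`k + l = k*`, `||k|^{2α} + |l|^{2α} - μ*| ≤ 1`, `|k| ≤ |l|`, `|k| ≤ K` is at most `C K^{1-α}`. -/
theorem count_sum_of_fractional_powers (α : ℝ) (hα : 1/2 < α) (hα' : α < 1) :
    ∃ C : ℝ, 0 < C ∧
      ∀ (K : ℝ), 1 ≤ K → ∀ (μs : ℝ) (ks : ℤ),
        ({p : ℤ × ℤ | p.1 + p.2 = ks ∧
            |(|(p.1 : ℝ)| ^ (2 * α) + |(p.2 : ℝ)| ^ (2 * α) - μs)| ≤ 1 ∧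
            |p.1| ≤ |p.2| ∧ (|p.1| : ℝ) ≤ K}).Finite ∧
        (({p : ℤ × ℤ | p.1 + p.2 = ks ∧
            |(|(p.1 : ℝ)| ^ (2 * α) + |(p.2 : ℝ)| ^ (2 * α) - μs)| ≤ 1 ∧
            |p.1| ≤ |p.2| ∧ (|p.1| : ℝ) ≤ K}).ncard : ℝ) ≤ C * K ^ (1 - α) := by
  obtain ⟨C, hC, hcount⟩ := count_sum_of_fractional_powers_general α hα hα'.le
  refine ⟨C, hC, fun K hK μs ks ↦ ?_⟩
  obtain ⟨hfin, hcard⟩ := hcount K hK μs ks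
  refine ⟨hfin.subset ?sub, (Nat.cast_le.2 (ncard_le_ncard ?sub hfin)).trans hcard⟩
  exact fun p ⟨hsum, hμ, _, hK⟩ ↦ ⟨hsum, hμ, hK⟩
end

section
/- Let 1/2 < α < 1 and c > 0. There exists C > 0, depending only on α and c, such that for every real K ≥ 1, every real μ*, and every k* ∈ ℤ with |k*| ≥ c·K^{1−α}, the number of pairs (k, l) ∈ ℤ × ℤ satisfying k − l = k*, | |k|^{2α} − |l|^{2α} − μ* | ≤ 1, |k| ≤ |l|, and |k| ≤ K is at most C·K^{1−α}. -/
/-!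
Put `p = 2α`, so `1 < p ≤ 2`. The function `x ↦ |x| ^ p - |x - m| ^ p` has derivative
`p * (s x - s (x - m))`, where `s x = sign x * |x| ^ (p - 1)` is increasing, with slope at least
`(p - 1) * (2 * K) ^ (p - 2)` on `[-2K, 2K]`. When `|m| ≥ h := min c 1 * K ^ (1 - α)`, the
derivative therefore has constant sign on `[-K, K]` and size at least a constant times
`K ^ (2α - 2) * h`, that is, a constant times `K ^ (α - 1)`. So the values at distinct integers
are separated by that much, and a window of length `2` catches `O(K ^ (1 - α))` of them.
-/

open Set

lemma mul_sub_le_rpow_sub_rpow {β R u v : ℝ} (hβ0 : 0 ≤ β) (hβ1 : β ≤ 1) (hu : 0 ≤ u)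
    (huv : u ≤ v) (hv : v ≤ R) : β * R ^ (β - 1) * (v - u) ≤ v ^ β - u ^ β := by
  refine (convex_Icc u v).mul_sub_le_image_sub_of_le_deriv
    (Real.continuous_rpow_const hβ0).continuousOn ?_ ?_
    u (left_mem_Icc.2 huv) v (right_mem_Icc.2 huv) huv
  all_goals rw [interior_Icc]; intro t ht
  · exact (Real.hasDerivAt_rpow_const
      (.inl (hu.trans_lt ht.1).ne')).differentiableAt.differentiableWithinAt
  · have ht0 : 0 < t := hu.trans_lt ht.1
    rw [Real.deriv_rpow_const]
    exact mul_le_mul_of_nonneg_left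
      (Real.rpow_le_rpow_of_nonpos ht0 (ht.2.le.trans hv) (by linarith)) hβ0

/-- The odd extension `sign x * |x| ^ β` of the power `x ^ β`, which is up to a constant factor the
derivative of `|x| ^ (β + 1)`. It is written without `sign`, to match `hasDerivAt_abs_rpow`. -/
noncomputable def signedRpow (β x : ℝ) : ℝ := |x| ^ (β - 1) * x

lemma signedRpow_neg (β x : ℝ) : signedRpow β (-x) = -signedRpow β x := by
  simp [signedRpow]

lemma signedRpow_of_nonneg {β x : ℝ} (hβ : β ≠ 0) (hx : 0 ≤ x) : signedRpow β x = x ^ β := by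
  rw [signedRpow, abs_of_nonneg hx]
  rcases hx.eq_or_lt with rfl | hx
  · rw [mul_zero, Real.zero_rpow hβ]
  · rw [← Real.rpow_add_one hx.ne', sub_add_cancel]

lemma monotone_signedRpow {β : ℝ} (hβ : 0 < β) : Monotone (signedRpow β) := by
  refine monotone_of_odd_of_monotoneOn_nonneg (signedRpow_neg β) fun x hx y hy hxy ↦ ?_
  rw [signedRpow_of_nonneg hβ.ne' hx, signedRpow_of_nonneg hβ.ne' hy]
  exact Real.rpow_le_rpow hx hxy hβ.le

lemma mul_sub_le_signedRpow_sub_signedRpow {β R u v : ℝ} (hβ0 : 0 < β) (hβ1 : β ≤ 1)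
    (hu : -R ≤ u) (huv : u ≤ v) (hv : v ≤ R) :
    β * R ^ (β - 1) * (v - u) ≤ signedRpow β v - signedRpow β u := by
  have nonneg_case {a b : ℝ} (ha : 0 ≤ a) (hab : a ≤ b) (hb : b ≤ R) :
      β * R ^ (β - 1) * (b - a) ≤ signedRpow β b - signedRpow β a := by
    rw [signedRpow_of_nonneg hβ0.ne' ha, signedRpow_of_nonneg hβ0.ne' (ha.trans hab)]
    exact mul_sub_le_rpow_sub_rpow hβ0.le hβ1 ha hab hb
  have nonpos_case {a b : ℝ} (ha : -R ≤ a) (hab : a ≤ b) (hb : b ≤ 0) :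
      β * R ^ (β - 1) * (b - a) ≤ signedRpow β b - signedRpow β a := by
    have := nonneg_case (neg_nonneg.2 hb) (neg_le_neg hab) (neg_le.1 ha)
    rw [signedRpow_neg, signedRpow_neg] at this
    linarith
  rcases le_total 0 u with hu0 | hu0
  · exact nonneg_case hu0 huv hv
  rcases le_total v 0 with hv0 | hv0
  · exact nonpos_case hu huv hv0
  · linarith [nonpos_case hu hu0 le_rfl, nonneg_case le_rfl hv0 hv]

lemma mul_le_signedRpow_sub_signedRpow_sub {β K h m x : ℝ} (hβ0 : 0 < β) (hβ1 : β ≤ 1)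
    (h0 : 0 ≤ h) (hK : h ≤ K) (hm : h ≤ m) (hx : x ∈ Icc (-K) K) :
    β * (2 * K) ^ (β - 1) * h ≤ signedRpow β x - signedRpow β (x - m) := by
  calc β * (2 * K) ^ (β - 1) * h
      = β * (2 * K) ^ (β - 1) * (x - (x - h)) := by rw [sub_sub_cancel]
    _ ≤ signedRpow β x - signedRpow β (x - h) :=
        mul_sub_le_signedRpow_sub_signedRpow hβ0 hβ1
          (by linarith [hx.1]) (by linarith) (by linarith [hx.2])
    _ ≤ signedRpow β x - signedRpow β (x - m) :=
        sub_le_sub_left (monotone_signedRpow hβ0 (by linarith)) _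

/-- The difference `|x| ^ p - |x - m| ^ p` of the powers of two reals `x` and `x - m` at prescribed
distance `m`, as a function of the first one. -/
noncomputable def absRpowDiff (p m x : ℝ) : ℝ := |x| ^ p - |x - m| ^ p

lemma absRpowDiff_neg_neg (p m x : ℝ) : absRpowDiff p (-m) (-x) = absRpowDiff p m x := by
  rw [absRpowDiff, absRpowDiff, neg_sub_neg, abs_neg, abs_sub_comm]

lemma hasDerivAt_absRpowDiff {p : ℝ} (hp : 1 < p) (m x : ℝ) :
    HasDerivAt (absRpowDiff p m) (p * (signedRpow (p - 1) x - signedRpow (p - 1) (x - m))) x := by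
  have hasDerivAt_abs (y : ℝ) :
      HasDerivAt (fun z : ℝ ↦ |z| ^ p) (p * signedRpow (p - 1) y) y := by
    convert hasDerivAt_abs_rpow y hp using 1
    rw [signedRpow, mul_assoc]
    ring_nf
  rw [mul_sub]
  exact (hasDerivAt_abs x).sub ((hasDerivAt_abs (x - m)).comp_sub_const x m)

section Expansion

variable {p K h m : ℝ} (hp1 : 1 < p) (hp2 : p ≤ 2) (h0 : 0 ≤ h) (hK : h ≤ K)
include hp1 hp2 h0 hK

lemma mul_sub_le_absRpowDiff_sub_absRpowDiff (hm : h ≤ m) {x y : ℝ} (hx : x ∈ Icc (-K) K)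
    (hy : y ∈ Icc (-K) K) (hxy : x ≤ y) :
    p * ((p - 1) * (2 * K) ^ (p - 2) * h) * (y - x) ≤ absRpowDiff p m y - absRpowDiff p m x := by
  refine (convex_Icc (-K) K).mul_sub_le_image_sub_of_le_deriv
    (fun t _ ↦ (hasDerivAt_absRpowDiff hp1 m t).continuousAt.continuousWithinAt)
    (fun t _ ↦ (hasDerivAt_absRpowDiff hp1 m t).differentiableAt.differentiableWithinAt)
    (fun t ht ↦ ?_) x hx y hy hxy
  rw [(hasDerivAt_absRpowDiff hp1 m t).deriv, show p - 2 = p - 1 - 1 by ring]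
  exact mul_le_mul_of_nonneg_left
    (mul_le_signedRpow_sub_signedRpow_sub (by linarith) (by linarith) h0 hK hm
      (interior_subset ht)) (by linarith)

lemma mul_abs_sub_le_abs_absRpowDiff_sub_absRpowDiff (hm : h ≤ |m|) {x y : ℝ}
    (hx : x ∈ Icc (-K) K) (hy : y ∈ Icc (-K) K) :
    p * ((p - 1) * (2 * K) ^ (p - 2) * h) * |y - x| ≤
      |absRpowDiff p m y - absRpowDiff p m x| := by
  wlog hm0 : 0 ≤ m generalizing m x y
  · have := this (m := -m) (x := -x) (y := -y) (by rwa [abs_neg]) (neg_mem_Icc_iff.2 (by simpa))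
      (neg_mem_Icc_iff.2 (by simpa)) (by linarith)
    rwa [absRpowDiff_neg_neg, absRpowDiff_neg_neg, neg_sub_neg, abs_sub_comm] at this
  wlog hxy : x ≤ y generalizing x y
  · rw [abs_sub_comm, abs_sub_comm (absRpowDiff p m y)]
    exact this hy hx (le_of_not_ge hxy)
  rw [abs_of_nonneg hm0] at hm
  rw [abs_of_nonneg (sub_nonneg.2 hxy)]
  exact (mul_sub_le_absRpowDiff_sub_absRpowDiff hp1 hp2 h0 hK hm hx hy hxy).trans (le_abs_self _)

end Expansion

lemma finite_and_ncard_le_of_abs_sub_le {S : Set ℤ} {L : ℝ} (hL : 0 ≤ L)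
    (hS : ∀ x ∈ S, ∀ y ∈ S, |(y : ℝ) - x| ≤ L) : S.Finite ∧ (S.ncard : ℝ) ≤ L + 1 := by
  rcases S.eq_empty_or_nonempty with rfl | ⟨q, hq⟩
  · simpa using by positivity
  have abs_sub_le_floor {x y : ℤ} (hx : x ∈ S) (hy : y ∈ S) : |y - x| ≤ ⌊L⌋ :=
    Int.le_floor.2 (by exact_mod_cast hS x hx y hy)
  obtain ⟨a, ha, ha_le⟩ := Int.exists_least_of_bdd (P := (· ∈ S))
    ⟨q - ⌊L⌋, fun y hy ↦ by linarith [(abs_le.1 (abs_sub_le_floor hq hy)).1]⟩ ⟨q, hq⟩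
  have hsub : S ⊆ Finset.Icc a (a + ⌊L⌋) := fun y hy ↦ by
    rw [Finset.coe_Icc]
    exact ⟨ha_le y hy, by linarith [le_of_abs_le (abs_sub_le_floor ha hy)]⟩
  refine ⟨(Finset.finite_toSet _).subset hsub, ?_⟩
  have hcard : (S.ncard : ℤ) ≤ ⌊L⌋ + 1 := by
    have := ncard_le_ncard hsub (Finset.finite_toSet _)
    rw [ncard_coe_finset, Int.card_Icc] at this
    have := Int.floor_nonneg.2 hL
    omega
  calc (S.ncard : ℝ) ≤ ⌊L⌋ + 1 := by exact_mod_cast hcard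
    _ ≤ L + 1 := by gcongr; exact Int.floor_le L

lemma finite_and_ncard_le_of_mul_abs_sub_le {S : Set ℤ} {f : ℤ → ℝ} {d w μ : ℝ} (hd : 0 < d)
    (hw : 0 ≤ w) (hf : ∀ x ∈ S, ∀ y ∈ S, d * |(y : ℝ) - x| ≤ |f y - f x|)
    (hμ : ∀ x ∈ S, |f x - μ| ≤ w) : S.Finite ∧ (S.ncard : ℝ) ≤ 2 * w / d + 1 := by
  refine finite_and_ncard_le_of_abs_sub_le (by positivity) fun x hx y hy ↦ ?_
  rw [le_div_iff₀' hd]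
  calc d * |(y : ℝ) - x| ≤ |f y - f x| := hf x hx y hy
    _ ≤ |f y - μ| + |μ - f x| := abs_sub_le _ _ _
    _ ≤ 2 * w := by rw [abs_sub_comm μ]; linarith [hμ x hx, hμ y hy]

lemma finite_and_ncard_absRpowDiff_window_le {p K h m w : ℝ} (hp1 : 1 < p) (hp2 : p ≤ 2)
    (h0 : 0 < h) (hK : h ≤ K) (hm : h ≤ |m|) (hw : 0 ≤ w) (μ : ℝ) :
    {k : ℤ | |absRpowDiff p m k - μ| ≤ w ∧ |(k : ℝ)| ≤ K}.Finite ∧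
      ({k : ℤ | |absRpowDiff p m k - μ| ≤ w ∧ |(k : ℝ)| ≤ K}.ncard : ℝ) ≤
        2 * w / (p * ((p - 1) * (2 * K) ^ (p - 2) * h)) + 1 := by
  have hslope : 0 < p * ((p - 1) * (2 * K) ^ (p - 2) * h) := by
    have : 0 < p - 1 := sub_pos.2 hp1
    have : 0 < K := h0.trans_le hK
    positivity
  exact finite_and_ncard_le_of_mul_abs_sub_le hslope hw
    (fun x hx y hy ↦ mul_abs_sub_le_abs_absRpowDiff_sub_absRpowDiff hp1 hp2 h0.le hK hm
      (abs_le.1 hx.2) (abs_le.1 hy.2))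
    (fun x hx ↦ hx.1)

lemma setOf_pairs_subset_image_absRpowDiff_window (p K w μ : ℝ) (m : ℤ) :
    {q : ℤ × ℤ | q.1 - q.2 = m ∧ |(|(q.1 : ℝ)| ^ p - |(q.2 : ℝ)| ^ p - μ)| ≤ w ∧
        |(q.1 : ℝ)| ≤ K} ⊆
      (fun k ↦ (k, k - m)) '' {k : ℤ | |absRpowDiff p m k - μ| ≤ w ∧ |(k : ℝ)| ≤ K} := by
  rintro ⟨k, l⟩ ⟨rfl, hμ, hk⟩
  exact ⟨k, ⟨by simpa [absRpowDiff] using hμ, hk⟩, by simp⟩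

lemma finite_and_ncard_pairs_le {p K h w : ℝ} {m : ℤ} (hp1 : 1 < p) (hp2 : p ≤ 2) (h0 : 0 < h)
    (hK : h ≤ K) (hm : h ≤ |(m : ℝ)|) (hw : 0 ≤ w) (μ : ℝ) :
    {q : ℤ × ℤ | q.1 - q.2 = m ∧ |(|(q.1 : ℝ)| ^ p - |(q.2 : ℝ)| ^ p - μ)| ≤ w ∧
        |(q.1 : ℝ)| ≤ K}.Finite ∧
      ({q : ℤ × ℤ | q.1 - q.2 = m ∧ |(|(q.1 : ℝ)| ^ p - |(q.2 : ℝ)| ^ p - μ)| ≤ w ∧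
        |(q.1 : ℝ)| ≤ K}.ncard : ℝ) ≤ 2 * w / (p * ((p - 1) * (2 * K) ^ (p - 2) * h)) + 1 := by
  obtain ⟨hfin, hcard⟩ := finite_and_ncard_absRpowDiff_window_le hp1 hp2 h0 hK hm hw μ
  have hsub := setOf_pairs_subset_image_absRpowDiff_window p K w μ m
  exact ⟨(hfin.image _).subset hsub, (Nat.cast_le.2
    ((ncard_le_ncard hsub (hfin.image _)).trans (ncard_image_le hfin))).trans hcard⟩

lemma mul_rpow_two_mul_sub_two_mul_rpow {K : ℝ} (hK : 0 < K) (α : ℝ) :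
    (2 * K) ^ (2 * α - 2) * K ^ (1 - α) = 2 ^ (2 * α - 2) / K ^ (1 - α) := by
  rw [Real.mul_rpow zero_le_two hK.le, mul_assoc, ← Real.rpow_add hK, div_eq_mul_inv,
    ← Real.rpow_neg hK.le]
  ring_nf

theorem count_difference_of_fractional_powers_general (α : ℝ) (hα : 1 / 2 < α) (hα' : α ≤ 1)
    (c : ℝ) (hc : 0 < c) :
    ∃ C : ℝ, 0 < C ∧
      ∀ K : ℝ, 1 ≤ K → ∀ (μs : ℝ) (ks : ℤ), c * K ^ (1 - α) ≤ |(ks : ℝ)| →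
        {p : ℤ × ℤ | p.1 - p.2 = ks ∧
            |(|(p.1 : ℝ)| ^ (2 * α) - |(p.2 : ℝ)| ^ (2 * α) - μs)| ≤ 1 ∧
            |(p.1 : ℝ)| ≤ K}.Finite ∧
        ({p : ℤ × ℤ | p.1 - p.2 = ks ∧
            |(|(p.1 : ℝ)| ^ (2 * α) - |(p.2 : ℝ)| ^ (2 * α) - μs)| ≤ 1 ∧
            |(p.1 : ℝ)| ≤ K}.ncard : ℝ) ≤ C * K ^ (1 - α) := by
  set d := 2 * α * ((2 * α - 1) * 2 ^ (2 * α - 2) * min c 1) with hd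
  have hmin : 0 < min c 1 := lt_min hc one_pos
  have hd0 : 0 < d := by
    have : 0 < 2 * α - 1 := by linarith
    have : 0 < α := by linarith
    rw [hd]
    positivity
  refine ⟨2 / d + 1, by positivity, fun K hK μs ks hks ↦ ?_⟩
  have hP1 : 1 ≤ K ^ (1 - α) := Real.one_le_rpow hK (by linarith)
  have hPK : K ^ (1 - α) ≤ K := Real.rpow_le_self_of_one_le hK (by linarith)
  have hslope : 2 * α * ((2 * α - 1) * (2 * K) ^ (2 * α - 2) * (min c 1 * K ^ (1 - α))) =
      d / K ^ (1 - α) := by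
    rw [hd]
    linear_combination 2 * α * (2 * α - 1) * min c 1 *
      mul_rpow_two_mul_sub_two_mul_rpow (one_pos.trans_le hK) α
  obtain ⟨hfin, hcard⟩ := finite_and_ncard_pairs_le (p := 2 * α)
    (by linarith) (by linarith) (mul_pos hmin (one_pos.trans_le hP1))
    ((mul_le_of_le_one_left (by positivity) (min_le_right c 1)).trans hPK)
    ((mul_le_mul_of_nonneg_right (min_le_left c 1) (by positivity)).trans hks) zero_le_one μs
  rw [hslope, mul_one, div_div_eq_mul_div, mul_div_right_comm] at hcard
  exact ⟨hfin, hcard.trans (by linarith)⟩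

/-- For `1/2 < α < 1` and `c > 0` there is `C > 0` (depending only on `α, c`)
such that for every `K ≥ 1`, every real `μ*`, and every `k* ∈ ℤ` with `|k*| ≥ c K^{1-α}`,
the number of pairs `(k,l) ∈ ℤ²` with `k - l = k*`, `||k|^{2α} - |l|^{2α} - μ*| ≤ 1`,
`|k| ≤ |l|`, `|k| ≤ K` is at most `C K^{1-α}`. -/
theorem count_difference_of_fractional_powers (α : ℝ) (hα : 1/2 < α) (hα' : α < 1)
    (c : ℝ) (hc : 0 < c) :
    ∃ C : ℝ, 0 < C ∧
      ∀ (K : ℝ), 1 ≤ K → ∀ (μs : ℝ) (ks : ℤ), c * K ^ (1 - α) ≤ (|ks| : ℝ) →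
        ({p : ℤ × ℤ | p.1 - p.2 = ks ∧
            |(|(p.1 : ℝ)| ^ (2 * α) - |(p.2 : ℝ)| ^ (2 * α) - μs)| ≤ 1 ∧
            |p.1| ≤ |p.2| ∧ (|p.1| : ℝ) ≤ K}).Finite ∧
        (({p : ℤ × ℤ | p.1 - p.2 = ks ∧
            |(|(p.1 : ℝ)| ^ (2 * α) - |(p.2 : ℝ)| ^ (2 * α) - μs)| ≤ 1 ∧
            |p.1| ≤ |p.2| ∧ (|p.1| : ℝ) ≤ K}).ncard : ℝ) ≤ C * K ^ (1 - α) := by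
  obtain ⟨C, hC, hcount⟩ := count_difference_of_fractional_powers_general α hα hα'.le c hc
  refine ⟨C, hC, fun K hK μs ks hks ↦ ?_⟩
  obtain ⟨hfin, hcard⟩ := hcount K hK μs ks hks
  refine ⟨hfin.subset ?_, (Nat.cast_le.2 (ncard_le_ncard ?_ hfin)).trans hcard⟩ <;>
    exact fun p hp ↦ ⟨hp.1, hp.2.1, hp.2.2.2⟩
end
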